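/- arXiv:1903.11497 — 2 statements merged into one kernel-verified Lean document; each statement's English description precedes it below -/
import Mathlib

section
/- Let F be a finite field with q elements, ψ : F → ℂˣ a nontrivial additive character, and n > m ≥ 1 integers. Let (π, V) be an irreducible cuspidal representation of GL_n(F) and (τ, W) an irreducible generic representation of GL_m(F). Then there exists a complex number γ such that for every integer k with 0 ≤ k ≤ n−m−1, every ψ_n-Whittaker functional λ on π, every v ∈ V, every ψ_m^{-1}-Whittaker functional μ on τ, and every w ∈ W, writing W_π(g) = λ(π(g)v) and W_τ(h) = μ(τ(h)w), one has γ · q^{km} · |U_m(F)|^{-1} Σ_{g ∈ GL_m(F)} Σ_{x ∈ M_{(n−m−1−k)×m}(F)} W_π(A(g,x)) W_τ(g) = |U_m(F)|^{-1} Σ_{g ∈ GL_m(F)} Σ_{y ∈ M_{m×k}(F)} W_π(B(g,y)) W_τ(g), where A(g,x) is the n×n block matrix with diagonal blocks g, I_{n−m−1−k}, I_{k+1}, with x in the block position below g (rows m+1,…,n−k−1, columns 1,…,m) and all other off-diagonal blocks zero, and B(g,y) is the n×n block matrix with block rows of heights (n−m−k, k, m) and block columns of widths (m, n−m−k, k)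 given by rows [0, I_{n−m−k}, 0], [0, 0, I_k], [g, 0, y]. -/
/-!
Statement 0: existence of the Rankin–Selberg gamma factor over a finite field
(Roditty; Nien, Theorem 2.10): for an irreducible cuspidal representation π of
GL_n(F) and an irreducible generic representation τ of GL_m(F), n > m, there is
a complex number γ satisfying the functional equation.
-/

open Matrix BigOperators

namespace Stmt0

variable (F : Type*) [Field F] [Fintype F] [DecidableEq F]

noncomputable instance {n : ℕ} : Fintype (GL (Fin n) F) :=
  inferInstanceAs (Fintype (Matrix (Fin n) (Fin n) F)ˣ)

/-- A matrix is upper triangular unipotent. -/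
def IsUnip {n : ℕ} (u : Matrix (Fin n) (Fin n) F) : Prop :=
  (∀ i, u i i = 1) ∧ ∀ i j : Fin n, (j : ℕ) < (i : ℕ) → u i j = 0

open scoped Classical in
/-- The subgroup `U_n(F)` of upper triangular unipotent matrices, as a finset of `GL n F`. -/
noncomputable def UnipFinset (n : ℕ) : Finset (GL (Fin n) F) :=
  Finset.univ.filter fun u => IsUnip F (u : Matrix (Fin n) (Fin n) F)

/-- The sum of the superdiagonal entries of a matrix. -/
def superdiag {n : ℕ} (u : Matrix (Fin n) (Fin n) F) : F :=
  ∑ i : Fin n, ∑ j : Fin n, if (j : ℕ) = (i : ℕ) + 1 then u i j else 0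

variable {F}

/-- The character `ψ_n` of `U_n(F)`:  `ψ_n(u) = ψ(u_{1,2} + ⋯ + u_{n-1,n})`,
as a complex-valued function on `GL n F`. -/
noncomputable def psiN (ψ : AddChar F ℂˣ) {n : ℕ} (u : GL (Fin n) F) : ℂ :=
  (ψ (superdiag F (u : Matrix (Fin n) (Fin n) F)) : ℂˣ)

/-- Promote a matrix to an element of `GL n F` (junk value `1` if not invertible). -/
noncomputable def toGL {n : ℕ} (M : Matrix (Fin n) (Fin n) F) : GL (Fin n) F :=
  if h : M.det ≠ 0 then Matrix.GeneralLinearGroup.mkOfDetNeZero M h else 1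

/-- `lam` is a `χ`-Whittaker functional for `π`. -/
def IsWhittaker {n : ℕ} {V : Type*} [AddCommGroup V] [Module ℂ V]
    (π : Representation ℂ (GL (Fin n) F) V) (χ : GL (Fin n) F → ℂ)
    (lam : V →ₗ[ℂ] ℂ) : Prop :=
  ∀ u : GL (Fin n) F, IsUnip F (u : Matrix (Fin n) (Fin n) F) →
    ∀ v : V, lam (π u v) = χ u * lam v

/-- `π` is irreducible: the only invariant subspaces are `⊥` and `⊤`. -/
def IsIrreducible {n : ℕ} {V : Type*} [AddCommGroup V] [Module ℂ V]
    (π : Representation ℂ (GL (Fin n) F) V) : Prop :=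
  ∀ W : Submodule ℂ V, (∀ g v, v ∈ W → π g v ∈ W) → W = ⊥ ∨ W = ⊤

/-- `π` is cuspidal : for each decomposition `n = n₁ + n₂` with `n₁, n₂ ≥ 1`, the sum of the
`π([[1,x],[0,1]])` over `x ∈ M_{n₁×n₂}(F)` vanishes. -/
def IsCuspidal {n : ℕ} {V : Type*} [AddCommGroup V] [Module ℂ V]
    (π : Representation ℂ (GL (Fin n) F) V) : Prop :=
  ∀ n₁ n₂ : ℕ, 1 ≤ n₁ → 1 ≤ n₂ → ∀ h : n₁ + n₂ = n,
    ∑ x : Matrix (Fin n₁) (Fin n₂) F,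
      π (toGL (Matrix.reindex (finSumFinEquiv.trans (finCongr h))
          (finSumFinEquiv.trans (finCongr h)) (Matrix.fromBlocks 1 x 0 1))) = 0

/-- The block matrix `A(g,x)` with diagonal blocks `g, I_{n-m-1-k}, I_{k+1}` and `x` in the
block position below `g`, all other off-diagonal blocks being zero. -/
def Amat {n m k : ℕ} (hm : m < n) (hk : k ≤ n - m - 1)
    (g : Matrix (Fin m) (Fin m) F) (x : Matrix (Fin (n - m - 1 - k)) (Fin m) F) :
    Matrix (Fin n) (Fin n) F := fun i j =>
  if hi : (i : ℕ) < m then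
    if hj : (j : ℕ) < m then g ⟨i, hi⟩ ⟨j, hj⟩ else 0
  else
    if hj : (j : ℕ) < m then
      if hik : (i : ℕ) < n - k - 1 then
        x ⟨(i : ℕ) - m, by omega⟩ ⟨j, hj⟩
      else 0
    else if (i : ℕ) = (j : ℕ) then 1 else 0

/-- The block matrix `B(g,y)` with block rows of heights `(n-m-k, k, m)` and block columns of
widths `(m, n-m-k, k)` given by rows `[0, I, 0]`, `[0, 0, I]`, `[g, 0, y]`. -/
def Bmat {n m k : ℕ} (hm : m < n) (hk : k ≤ n - m - 1)
    (g : Matrix (Fin m) (Fin m) F) (y : Matrix (Fin m) (Fin k) F) :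
    Matrix (Fin n) (Fin n) F := fun i j =>
  if hi : (i : ℕ) < n - m then
    if (j : ℕ) = (i : ℕ) + m then 1 else 0
  else
    if hj : (j : ℕ) < m then g ⟨(i : ℕ) - (n - m), by omega⟩ ⟨j, hj⟩
    else if hj2 : n - k ≤ (j : ℕ) then
      y ⟨(i : ℕ) - (n - m), by omega⟩ ⟨(j : ℕ) - (n - k), by omega⟩
    else 0

set_option linter.unusedSectionVars false


section Basics
variable {n : ℕ}

lemma toGL_coe (U : GL (Fin n) F) : toGL (U : Matrix (Fin n) (Fin n) F) = U := by
  have h : (U : Matrix (Fin n) (Fin n) F).det ≠ 0 :=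
    ((Matrix.isUnit_iff_isUnit_det _).1 U.isUnit).ne_zero
  unfold toGL
  rw [dif_pos h]
  ext i j
  rfl

lemma toGL_val {M : Matrix (Fin n) (Fin n) F} (h : M.det ≠ 0) :
    ((toGL M : GL (Fin n) F) : Matrix (Fin n) (Fin n) F) = M := by
  unfold toGL
  rw [dif_pos h]
  rfl

lemma toGL_val' {M N : Matrix (Fin n) (Fin n) F} (h : M * N = 1) :
    ((toGL M : GL (Fin n) F) : Matrix (Fin n) (Fin n) F) = M := by
  apply toGL_val
  intro h0
  have := congrArg Matrix.det h
  rw [Matrix.det_mul, h0, zero_mul, Matrix.det_one] at this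
  exact zero_ne_one this

lemma toGL_eq {M : Matrix (Fin n) (Fin n) F} {U : GL (Fin n) F}
    (h : (U : Matrix (Fin n) (Fin n) F) = M) : toGL M = U := by
  rw [← h, toGL_coe]

/-- strictly upper triangular -/
def SU (D : Matrix (Fin n) (Fin n) F) : Prop := ∀ i j : Fin n, (j : ℕ) ≤ (i : ℕ) → D i j = 0

lemma isUnip_one_add {D : Matrix (Fin n) (Fin n) F} (h : SU D) : IsUnip F (1 + D) := by
  refine ⟨fun i => ?_, fun i j hij => ?_⟩
  · simp [h i i le_rfl]
  · have : i ≠ j := by rintro rfl; omega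
    simp [h i j hij.le, Matrix.one_apply_ne this]

lemma IsUnip.su {u : Matrix (Fin n) (Fin n) F} (h : IsUnip F u) : SU (u - 1) := by
  intro i j hij
  rcases hij.lt_or_eq with hlt | heq
  · have : i ≠ j := by rintro rfl; omega
    simp [h.2 i j hlt, Matrix.one_apply_ne this]
  · have : j = i := Fin.ext heq
    subst this
    simp [h.1 j]

lemma SU.mul {D E : Matrix (Fin n) (Fin n) F} (hD : SU D) (hE : SU E) : SU (D * E) := by
  intro i j hij
  rw [Matrix.mul_apply]
  refine Finset.sum_eq_zero fun l _ => ?_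
  by_cases hl : (l : ℕ) ≤ i
  · rw [hD i l hl, zero_mul]
  · rw [hE l j (by omega), mul_zero]

lemma SU.add {D E : Matrix (Fin n) (Fin n) F} (hD : SU D) (hE : SU E) : SU (D + E) := by
  intro i j hij
  simp [hD i j hij, hE i j hij]

lemma superdiag_add (M N : Matrix (Fin n) (Fin n) F) :
    superdiag F (M + N) = superdiag F M + superdiag F N := by
  unfold superdiag
  simp only [← Finset.sum_add_distrib]
  refine Finset.sum_congr rfl fun i _ => Finset.sum_congr rfl fun j _ => ?_
  split_ifs <;> simp

lemma superdiag_eq_zero {M : Matrix (Fin n) (Fin n) F}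
    (h : ∀ i j : Fin n, (j : ℕ) = i + 1 → M i j = 0) : superdiag F M = 0 := by
  unfold superdiag
  refine Finset.sum_eq_zero fun i _ => Finset.sum_eq_zero fun j _ => ?_
  split_ifs with hij
  · exact h i j hij
  · rfl

lemma superdiag_congr {M N : Matrix (Fin n) (Fin n) F}
    (h : ∀ i j : Fin n, (j : ℕ) = i + 1 → M i j = N i j) : superdiag F M = superdiag F N := by
  unfold superdiag
  refine Finset.sum_congr rfl fun i _ => Finset.sum_congr rfl fun j _ => ?_
  split_ifs with hij
  · exact h i j hij
  · rfl

lemma superdiag_one : superdiag F (1 : Matrix (Fin n) (Fin n) F) = 0 :=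
  superdiag_eq_zero fun i j hij => Matrix.one_apply_ne (by rintro rfl; omega)

lemma superdiag_one_add (D : Matrix (Fin n) (Fin n) F) :
    superdiag F (1 + D) = superdiag F D := by
  rw [superdiag_add, superdiag_one, zero_add]

/-- superdiag as a single entry -/
lemma superdiag_single {M : Matrix (Fin n) (Fin n) F} (a b : Fin n) (hab : (b : ℕ) = a + 1)
    (h : ∀ i j : Fin n, (j : ℕ) = i + 1 → i ≠ a → M i j = 0) : superdiag F M = M a b := by
  unfold superdiag
  rw [Finset.sum_eq_single a, Finset.sum_eq_single b]
  · rw [if_pos hab]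
  · intro j _ hj
    rw [if_neg]
    intro hj'
    exact hj (Fin.ext (by omega))
  · simp
  · intro i _ hi
    refine Finset.sum_eq_zero fun j _ => ?_
    split_ifs with hij
    · exact h i j hij hi
    · rfl
  · simp

lemma IsUnip.mul {u v : Matrix (Fin n) (Fin n) F} (hu : IsUnip F u) (hv : IsUnip F v) :
    IsUnip F (u * v) := by
  have : u * v = 1 + ((u - 1) + (v - 1) + (u - 1) * (v - 1)) := by noncomm_ring
  rw [this]
  exact isUnip_one_add ((hu.su.add hv.su).add (hu.su.mul hv.su))

lemma IsUnip.superdiag_mul {u v : Matrix (Fin n) (Fin n) F} (hu : IsUnip F u) (hv : IsUnip F v) :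
    superdiag F (u * v) = superdiag F u + superdiag F v := by
  have : u * v = u + ((v - 1) + (u - 1) * (v - 1)) := by noncomm_ring
  have h0 : superdiag F ((u - 1) * (v - 1)) = 0 := by
    refine superdiag_eq_zero fun i j hij => ?_
    rw [Matrix.mul_apply]
    refine Finset.sum_eq_zero fun l _ => ?_
    by_cases hl : (l : ℕ) ≤ i
    · rw [hu.su i l hl, zero_mul]
    · rw [hv.su l j (by omega), mul_zero]
  have h1 : superdiag F v = superdiag F (v - 1) := by
    rw [← superdiag_one_add (v - 1)]; congr 1; abel
  rw [this, superdiag_add, superdiag_add, h0, h1, add_zero]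

lemma isUnip_one : IsUnip F (1 : Matrix (Fin n) (Fin n) F) :=
  ⟨fun i => by simp, fun i j h => Matrix.one_apply_ne (by rintro rfl; omega)⟩

lemma IsUnip.det {u : Matrix (Fin n) (Fin n) F} (hu : IsUnip F u) : u.det = 1 := by
  rw [Matrix.det_of_isUpperTriangular (fun i j h => hu.2 i j h)]
  exact Finset.prod_eq_one fun i _ => hu.1 i

lemma IsUnip.toGL_val {u : Matrix (Fin n) (Fin n) F} (hu : IsUnip F u) :
    ((toGL u : GL (Fin n) F) : Matrix (Fin n) (Fin n) F) = u :=
  Stmt0.toGL_val (by rw [hu.det]; exact one_ne_zero)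

lemma inv_mem_of_mul_closed {G : Type*} [Group G] [Finite G] (S : Submonoid G) {x : G}
    (hx : x ∈ S) : x⁻¹ ∈ S := by
  have h1 : x⁻¹ ∈ Subgroup.zpowers x := Subgroup.inv_mem _ (Subgroup.mem_zpowers x)
  have h2 : x⁻¹ ∈ Submonoid.powers x := by
    rw [mem_powers_iff_mem_zpowers]; exact h1
  exact (Submonoid.powers_le.2 hx) h2

variable (F n) in
/-- the unipotent group -/
def Un : Subgroup (GL (Fin n) F) where
  carrier := {u | IsUnip F (u : Matrix (Fin n) (Fin n) F)}
  mul_mem' := fun {a b} ha hb => by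
    show IsUnip F ((a * b : GL (Fin n) F) : Matrix (Fin n) (Fin n) F)
    rw [Units.val_mul]; exact IsUnip.mul ha hb
  one_mem' := isUnip_one
  inv_mem' := fun {x} hx => inv_mem_of_mul_closed
    { carrier := {u : GL (Fin n) F | IsUnip F (u : Matrix (Fin n) (Fin n) F)}
      mul_mem' := fun {a b} ha hb => by
        show IsUnip F ((a * b : GL (Fin n) F) : Matrix (Fin n) (Fin n) F)
        rw [Units.val_mul]; exact IsUnip.mul ha hb
      one_mem' := isUnip_one } hx

lemma mem_Un {u : GL (Fin n) F} : u ∈ Un F n ↔ IsUnip F (u : Matrix (Fin n) (Fin n) F) := Iff.rfl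

lemma psiN_mul (ψ : AddChar F ℂˣ) {u v : GL (Fin n) F} (hu : u ∈ Un F n) (hv : v ∈ Un F n) :
    psiN ψ (u * v) = psiN ψ u * psiN ψ v := by
  unfold psiN
  rw [Units.val_mul, IsUnip.superdiag_mul hu hv, AddChar.map_add_eq_mul, Units.val_mul]

lemma psiN_ne_zero (ψ : AddChar F ℂˣ) (u : GL (Fin n) F) : psiN ψ u ≠ 0 := Units.ne_zero _

lemma psiN_one (ψ : AddChar F ℂˣ) : psiN ψ (1 : GL (Fin n) F) = 1 := by
  unfold psiN
  rw [Units.val_one, superdiag_one]; simp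

lemma psiN_inv (ψ : AddChar F ℂˣ) {u : GL (Fin n) F} (hu : u ∈ Un F n) :
    psiN ψ u⁻¹ = (psiN ψ u)⁻¹ := by
  apply eq_inv_of_mul_eq_one_left
  rw [← psiN_mul ψ (inv_mem hu) hu, inv_mul_cancel, psiN_one]

lemma psiN_invchar (ψ : AddChar F ℂˣ) (u : GL (Fin n) F) :
    psiN ψ⁻¹ u = (psiN ψ u)⁻¹ := by
  unfold psiN
  rw [AddChar.inv_apply, AddChar.map_neg_eq_inv, Units.val_inv_eq_inv_val]

end Basics


section Combinatorics

lemma layered_step {n : ℕ} (ρ : ℕ → ℕ) (hρn : ∀ i < n, ρ i < n)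
    (hinj : ∀ i < n, ∀ j < n, ρ i = ρ j → i = j)
    (hsurj : ∀ b < n, ∃ i < n, ρ i = b)
    (t : ℕ → F)
    (hstep : ∀ i, i + 1 < n → ρ i < ρ (i + 1) ∨ (ρ i = ρ (i + 1) + 1 ∧ t i = t (i + 1)))
    (a : ℕ) (ha : a < n) (hlow : ∀ i < a, ρ i < a ∧ ρ (ρ i) = i ∧ t (ρ i) = t i) :
    ∃ b, a < b ∧ b ≤ n ∧ ∀ i < b, ρ i < b ∧ ρ (ρ i) = i ∧ t (ρ i) = t i := by
  have hge : ∀ i < n, a ≤ i → a ≤ ρ i := by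
    intro i hi hai
    by_contra hlt
    push Not at hlt
    have h1 := hlow _ hlt
    have : ρ i = ρ (ρ (ρ i)) := h1.2.1.symm
    have h2 := hinj i hi (ρ (ρ i)) (by omega) this
    omega
  have hab := hge a ha le_rfl
  have hbn := hρn a ha
  set b := ρ a with hb
  have key : ∀ s, s ≤ b - a → ∀ s' ≤ s, ρ (a + s') = b - s' ∧ t (a + s') = t a := by
    intro s
    induction s with
    | zero =>
      intro _ s' hs'
      obtain rfl : s' = 0 := by omega
      simp [hb]
    | succ s ih =>
      intro hs s' hs'
      have ih' := ih (by omega)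
      rcases Nat.lt_or_ge s' (s + 1) with hlt | hge'
      · exact ih' s' (by omega)
      obtain rfl : s' = s + 1 := by omega
      have h0 := ih' s le_rfl
      rcases hstep (a + s) (by omega) with hup | hdown
      · exfalso
        have hgt : b < ρ (a + s + 1) := by
          by_contra hle
          push Not at hle
          have h3 := ih' (b - ρ (a + s + 1)) (by omega)
          have h4 := hinj (a + (b - ρ (a + s + 1))) (by omega) (a + s + 1) (by omega)
            (by rw [h3.1]; omega)
          omega
        have hlater : ∀ p, a + s + 1 + p < n → b < ρ (a + s + 1 + p) := by
          intro p
          induction p with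
          | zero => intro _; exact hgt
          | succ p ihp =>
            intro hp
            have h5 := ihp (by omega)
            rcases hstep (a + s + 1 + p) (by omega) with h6 | h6
            · rw [← Nat.add_assoc]; omega
            · have h7 : ρ (a + s + 1 + p + 1) ≠ b := by
                intro h8
                have := hinj _ (by omega) a ha (h8.trans hb)
                omega
              rw [← Nat.add_assoc]; omega
        obtain ⟨i, hi, hib⟩ := hsurj (b - s - 1) (by omega)
        rcases Nat.lt_or_ge i a with h9 | h9
        · have := (hlow i h9).1; omega
        · rcases Nat.lt_or_ge i (a + s + 1) with h10 | h10
          · have := (ih' (i - a) (by omega)).1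
            rw [show a + (i - a) = i by omega] at this
            omega
          · have := hlater (i - (a + s + 1)) (by omega)
            rw [show a + s + 1 + (i - (a + s + 1)) = i by omega] at this
            omega
      · rw [← Nat.add_assoc]
        refine ⟨by omega, ?_⟩
        rw [← hdown.2]; exact h0.2
  have key' := key (b - a) le_rfl
  refine ⟨b + 1, by omega, by omega, fun i hi => ?_⟩
  rcases Nat.lt_or_ge i a with h | h
  · have := hlow i h
    exact ⟨by omega, this.2⟩
  · have h1 := key' (i - a) (by omega)
    rw [show a + (i - a) = i by omega] at h1
    have h2 := key' (b - (i - a) - a) (by omega)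
    rw [show a + (b - (i - a) - a) = b - (i - a) by omega] at h2
    refine ⟨by omega, ?_, ?_⟩
    · rw [h1.1, h2.1]; omega
    · rw [h1.1, h2.2, h1.2]

lemma layered {n : ℕ} (ρ : ℕ → ℕ) (hρn : ∀ i < n, ρ i < n)
    (hinj : ∀ i < n, ∀ j < n, ρ i = ρ j → i = j)
    (hsurj : ∀ b < n, ∃ i < n, ρ i = b)
    (t : ℕ → F)
    (hstep : ∀ i, i + 1 < n → ρ i < ρ (i + 1) ∨ (ρ i = ρ (i + 1) + 1 ∧ t i = t (i + 1))) :
    ∀ i < n, ρ (ρ i) = i ∧ t (ρ i) = t i := by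
  have main : ∀ c, ∃ a, (c ≤ a ∨ a = n) ∧ a ≤ n ∧
      ∀ i < a, ρ i < a ∧ ρ (ρ i) = i ∧ t (ρ i) = t i := by
    intro c
    induction c with
    | zero => exact ⟨0, Or.inl le_rfl, Nat.zero_le _, fun i hi => by omega⟩
    | succ c ih =>
      obtain ⟨a, h1, h2, h3⟩ := ih
      rcases h2.lt_or_eq with h | h
      · obtain ⟨b, hb1, hb2, hb3⟩ := layered_step ρ hρn hinj hsurj t hstep a h h3
        exact ⟨b, by omega, hb2, hb3⟩
      · exact ⟨a, Or.inr h, h2, h3⟩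
  obtain ⟨a, h1, h2, h3⟩ := main n
  obtain rfl : a = n := by omega
  exact fun i hi => (h3 i hi).2

end Combinatorics

section Bruhat
variable {n : ℕ}

/-- rank-one unipotent `1 + c e_{ab}`-like: `1 + a ⊗ b`. -/
def T1 (a b : Fin n → F) : Matrix (Fin n) (Fin n) F := 1 + vecMulVec a b

lemma T1_isUnip {a b : Fin n → F} (h : ∀ i j : Fin n, (j : ℕ) ≤ i → a i * b j = 0) :
    IsUnip F (T1 a b) :=
  isUnip_one_add fun i j hij => by rw [vecMulVec_apply]; exact h i j hij

lemma bruhat_step (M : Matrix (Fin n) (Fin n) F) (hM : M.det ≠ 0) (σ : Fin n → Fin n) (r : ℕ)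
    (hr : r < n)
    (h1 : ∀ i : Fin n, r < i → ∀ j, j ≠ σ i → M i j = 0)
    (h2 : ∀ i : Fin n, r < i → ∀ i', i' ≠ i → M i' (σ i) = 0) :
    ∃ u u' : Matrix (Fin n) (Fin n) F, IsUnip F u ∧ IsUnip F u' ∧ ∃ σ' : Fin n → Fin n,
      (∀ i : Fin n, r ≤ i → ∀ j, j ≠ σ' i → (u * M * u') i j = 0) ∧
      (∀ i : Fin n, r ≤ i → ∀ i', i' ≠ i → (u * M * u') i' (σ' i) = 0) := by
  classical
  let s : Fin n := ⟨r, hr⟩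
  have hex : ∃ j, M s j ≠ 0 := by
    by_contra hcon
    push Not at hcon
    exact hM (Matrix.det_eq_zero_of_row_eq_zero s hcon)
  obtain ⟨j, hj, hjmin⟩ := WellFounded.has_min (wellFounded_lt (α := Fin n)) {j | M s j ≠ 0} hex
  have hjmin' : ∀ l, l < j → M s l = 0 := by
    intro l hl
    by_contra hcon
    exact hjmin l hcon hl
  have hj' : M s j ≠ 0 := hj
  -- j is not a previous pivot
  have hjσ : ∀ i : Fin n, r < i → j ≠ σ i := by
    rintro i hi rfl
    exact hj' (h2 i hi s (by rintro rfl; exact lt_irrefl _ hi))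
  -- column clearing
  let b : Fin n → F := fun l => if j < l then - (M s l / M s j) else 0
  let u' : Matrix (Fin n) (Fin n) F := T1 (Pi.single j 1) b
  let M1 := M * u'
  have hM1 : ∀ i l, M1 i l = M i l + M i j * b l := by
    intro i l
    simp only [M1, u', T1, Matrix.mul_add, Matrix.mul_one, mul_vecMulVec, Matrix.add_apply,
      vecMulVec_apply, mulVec_single_one, Matrix.col_apply]
  let c : Fin n → F := fun i => if i < s then - (M i j / M s j) else 0
  let u : Matrix (Fin n) (Fin n) F := T1 c (Pi.single s 1)
  have hM2 : ∀ i l, (u * M * u') i l = M1 i l + c i * M1 s l := by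
    intro i l
    rw [Matrix.mul_assoc]
    simp only [u, T1, Matrix.add_mul, Matrix.one_mul, vecMulVec_mul, Matrix.add_apply,
      vecMulVec_apply, single_one_vecMul, Matrix.row_apply]
    rfl
  have hs1 : ∀ l, l ≠ j → M1 s l = 0 := by
    intro l hl
    rw [hM1]
    rcases lt_or_gt_of_ne hl with h | h
    · simp only [b, if_neg (not_lt.2 h.le), hjmin' l h]; ring
    · simp only [b, if_pos h]; field_simp; ring
  have hs2 : M1 s j = M s j := by rw [hM1]; simp [b]
  have hcol : ∀ i, M1 i j = M i j := by intro i; rw [hM1]; simp [b]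
  have hbσ : ∀ i : Fin n, r < i → b (σ i) = 0 := by
    intro i hi
    have : M s (σ i) = 0 := h2 i hi s (by rintro rfl; exact lt_irrefl _ hi)
    simp [b, this]
  have hij0 : ∀ i : Fin n, r < i → M i j = 0 := fun i hi => h1 i hi j (hjσ i hi)
  refine ⟨u, u', ?_, ?_, fun i => if i = s then j else σ i, ?_, ?_⟩
  · apply T1_isUnip
    intro i l hil
    by_cases hl : l = s
    · subst hl
      have : ¬ i < s := not_lt.2 hil
      simp [c, this]
    · simp [hl]
  · apply T1_isUnip
    intro i l hil
    by_cases hl : i = j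
    · subst hl
      have : ¬ i < l := not_lt.2 hil
      simp [b, this]
    · simp [hl]
  · intro i hi l hl
    rw [hM2]
    by_cases his : i = s
    · subst his
      simp only [if_true] at hl
      rw [hs1 l hl]; ring
    · have hri : r < i := lt_of_le_of_ne hi (fun h => his (Fin.ext h.symm))
      simp only [his, if_false] at hl
      have : ¬ i < s := fun h => absurd (Fin.lt_def.1 h) (by simp [s]; omega)
      rw [hM1, h1 i hri l hl, hij0 i hri]
      simp [c, this]
  · intro i hi i' hi'
    rw [hM2]
    by_cases his : i = s
    · subst his
      simp only [if_true]
      rw [hcol, hs2]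
      by_cases h : i' < s
      · simp only [c, if_pos h]; field_simp; ring
      · have hri : r < i' := lt_of_le_of_ne (not_lt.1 h) (fun h => hi' (Fin.ext h.symm))
        simp only [c, if_neg h, hij0 i' hri]; ring
    · have hri : r < i := lt_of_le_of_ne hi (fun h => his (Fin.ext h.symm))
      simp only [his, if_false]
      rw [hM1, hM1, hbσ i hri, h2 i hri i' hi', h2 i hri s (Ne.symm his)]
      ring

lemma bruhat_aux (g : Matrix (Fin n) (Fin n) F) (hg : g.det ≠ 0) (k : ℕ) (hk : k ≤ n) :
    ∃ u u' : Matrix (Fin n) (Fin n) F, IsUnip F u ∧ IsUnip F u' ∧ ∃ σ : Fin n → Fin n,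
      (∀ i : Fin n, n ≤ i + k → ∀ j, j ≠ σ i → (u * g * u') i j = 0) ∧
      (∀ i : Fin n, n ≤ i + k → ∀ i', i' ≠ i → (u * g * u') i' (σ i) = 0) := by
  induction k with
  | zero =>
    refine ⟨1, 1, isUnip_one, isUnip_one, id, ?_, ?_⟩ <;>
    · intro i hi; have := i.2; omega
  | succ k ih =>
    obtain ⟨u, u', hu, hu', σ, h1, h2⟩ := ih (by omega)
    have hdet : (u * g * u').det ≠ 0 := by
      rw [det_mul, det_mul, hu.det, hu'.det]; simpa using hg
    obtain ⟨v, v', hv, hv', σ', h3, h4⟩ := bruhat_step (u * g * u') hdet σ (n - k - 1) (by omega)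
      (fun i hi => h1 i (by omega)) (fun i hi => h2 i (by omega))
    refine ⟨v * u, u' * v', hv.mul hu, hu'.mul hv', σ', ?_, ?_⟩
    · intro i hi
      have := h3 i (by omega)
      simpa only [Matrix.mul_assoc] using this
    · intro i hi
      have := h4 i (by omega)
      simpa only [Matrix.mul_assoc] using this

lemma bruhat (g : GL (Fin n) F) : ∃ u ∈ Un F n, ∃ u' ∈ Un F n, ∃ σ : Fin n → Fin n,
      (∀ i j, j ≠ σ i → ((u * g * u' : GL (Fin n) F) : Matrix (Fin n) (Fin n) F) i j = 0) ∧
      (∀ i i', i' ≠ i →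
        ((u * g * u' : GL (Fin n) F) : Matrix (Fin n) (Fin n) F) i' (σ i) = 0) := by
  have hg : (g : Matrix (Fin n) (Fin n) F).det ≠ 0 :=
    ((Matrix.isUnit_iff_isUnit_det _).1 g.isUnit).ne_zero
  obtain ⟨u, u', hu, hu', σ, h1, h2⟩ := bruhat_aux (g : Matrix (Fin n) (Fin n) F) hg n le_rfl
  refine ⟨toGL u, ?_, toGL u', ?_, σ, ?_, ?_⟩
  · rw [mem_Un, hu.toGL_val]; exact hu
  · rw [mem_Un, hu'.toGL_val]; exact hu'
  · intro i
    rw [Units.val_mul, Units.val_mul, hu.toGL_val, hu'.toGL_val]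
    exact h1 i (by omega)
  · intro i
    rw [Units.val_mul, Units.val_mul, hu.toGL_val, hu'.toGL_val]
    exact h2 i (by omega)

end Bruhat


section Gelfand
variable {n : ℕ}

/-- the anti-involution on matrices -/
def iotaM (M : Matrix (Fin n) (Fin n) F) : Matrix (Fin n) (Fin n) F :=
  fun i j => M (Fin.rev j) (Fin.rev i)

lemma iotaM_mul (M N : Matrix (Fin n) (Fin n) F) : iotaM (M * N) = iotaM N * iotaM M := by
  ext i j
  simp only [iotaM, Matrix.mul_apply]
  rw [← Equiv.sum_comp Fin.revPerm]
  refine Finset.sum_congr rfl fun l _ => ?_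
  simp [mul_comm]

lemma iotaM_one : iotaM (1 : Matrix (Fin n) (Fin n) F) = 1 := by
  ext i j
  simp only [iotaM, Matrix.one_apply, Fin.rev_inj]
  simp only [eq_comm]

/-- the anti-involution on `GL n`. -/
def iota (g : GL (Fin n) F) : GL (Fin n) F where
  val := iotaM (g : Matrix (Fin n) (Fin n) F)
  inv := iotaM ((g⁻¹ : GL (Fin n) F) : Matrix (Fin n) (Fin n) F)
  val_inv := by rw [← iotaM_mul, ← Units.val_mul, inv_mul_cancel, Units.val_one, iotaM_one]
  inv_val := by rw [← iotaM_mul, ← Units.val_mul, mul_inv_cancel, Units.val_one, iotaM_one]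

lemma iota_val (g : GL (Fin n) F) :
    (iota g : Matrix (Fin n) (Fin n) F) = iotaM (g : Matrix (Fin n) (Fin n) F) := rfl

lemma iota_mul (g h : GL (Fin n) F) : iota (g * h) = iota h * iota g := by
  apply Units.ext
  rw [iota_val, Units.val_mul, Units.val_mul, iotaM_mul]
  rfl

lemma iota_iota (g : GL (Fin n) F) : iota (iota g) = g := by
  apply Units.ext
  ext i j
  simp [iota_val, iotaM]

lemma iota_mem {u : GL (Fin n) F} (hu : u ∈ Un F n) : iota u ∈ Un F n := by
  rw [mem_Un, iota_val]
  refine ⟨fun i => hu.1 _, fun i j hij => hu.2 _ _ ?_⟩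
  simp only [Fin.val_rev]
  omega

lemma psiN_iota (ψ : AddChar F ℂˣ) (u : GL (Fin n) F) : psiN ψ (iota u) = psiN ψ u := by
  unfold psiN
  congr 2
  rw [iota_val]
  unfold superdiag iotaM
  rw [Finset.sum_comm, ← Equiv.sum_comp Fin.revPerm]
  refine Finset.sum_congr rfl fun i _ => ?_
  rw [← Equiv.sum_comp Fin.revPerm]
  refine Finset.sum_congr rfl fun j _ => ?_
  simp only [Fin.revPerm_apply, Fin.rev_rev, Fin.val_rev]
  have h1 := i.2
  have h2 := j.2
  congr 1
  apply propext
  omega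

lemma mono_fixed (ψ : AddChar F ℂˣ) (hψ : ∃ a : F, ψ a ≠ 1) (M : GL (Fin n) F)
    (σ : Fin n → Fin n)
    (h1 : ∀ i j, j ≠ σ i → (M : Matrix (Fin n) (Fin n) F) i j = 0)
    (h2 : ∀ i i', i' ≠ i → (M : Matrix (Fin n) (Fin n) F) i' (σ i) = 0)
    (hgood : ∀ u ∈ Un F n, ∀ u' ∈ Un F n, u * M = M * u' → psiN ψ u = psiN ψ u') :
    iota M = M := by
  have hdet : (M : Matrix (Fin n) (Fin n) F).det ≠ 0 :=
    ((Matrix.isUnit_iff_isUnit_det _).1 M.isUnit).ne_zero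
  set A : Matrix (Fin n) (Fin n) F := (M : Matrix (Fin n) (Fin n) F) with hA
  have hne : ∀ i, A i (σ i) ≠ 0 := by
    intro i h0
    apply hdet
    apply Matrix.det_eq_zero_of_row_eq_zero i
    intro j
    by_cases hj : j = σ i
    · rw [hj, h0]
    · exact h1 i j hj
  have hσinj : Function.Injective σ := by
    intro i j hij
    by_contra hne'
    exact hne j (by rw [← hij]; exact h2 i j (Ne.symm hne'))
  have hσsurj : Function.Surjective σ := Finite.injective_iff_surjective.1 hσinj
  -- basic relation
  have hrel : ∀ i i' : Fin n, (i' : ℕ) = i + 1 → σ i < σ i' → ∀ a : F,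
      ψ a = ψ (superdiag F (T1 (Pi.single (σ i) 1)
        (Pi.single (σ i') (a * A i' (σ i') / A i (σ i))) : Matrix (Fin n) (Fin n) F)) := by
    intro i i' hii' hlt a
    have hu : IsUnip F (T1 (Pi.single i a) (Pi.single i' 1) : Matrix (Fin n) (Fin n) F) := by
      apply T1_isUnip
      intro k l hkl
      by_cases hk : k = i
      · subst hk
        rw [Pi.single_eq_of_ne (i := i') (by rintro rfl; omega), mul_zero]
      · rw [Pi.single_eq_of_ne hk, zero_mul]
    have hu' : IsUnip F (T1 (Pi.single (σ i) 1)
        (Pi.single (σ i') (a * A i' (σ i') / A i (σ i))) : Matrix (Fin n) (Fin n) F) := by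
      apply T1_isUnip
      intro k l hkl
      by_cases hk : k = σ i
      · subst hk
        rw [Pi.single_eq_of_ne (i := σ i') (by rintro rfl; rw [Fin.lt_def] at hlt; omega), mul_zero]
      · rw [Pi.single_eq_of_ne hk, zero_mul]
    have h := hgood (toGL _) (by rw [mem_Un, hu.toGL_val]; exact hu) (toGL _)
      (by rw [mem_Un, hu'.toGL_val]; exact hu') (by
        apply Units.ext
        rw [Units.val_mul, Units.val_mul, hu.toGL_val, hu'.toGL_val]
        ext k l
        simp only [T1, Matrix.add_mul, Matrix.one_mul, vecMulVec_mul, Matrix.mul_add,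
          Matrix.mul_one, mul_vecMulVec, Matrix.add_apply, vecMulVec_apply, single_one_vecMul,
          mulVec_single_one, Matrix.row_apply, Matrix.col_apply, ← hA]
        congr 1
        by_cases hk : k = i
        · subst hk
          by_cases hl : l = σ i'
          · subst hl
            simp only [Pi.single_eq_same]
            field_simp [hne k]
          · rw [h1 i' l hl, Pi.single_eq_of_ne hl]; ring
        · rw [h2 i k hk, Pi.single_eq_of_ne hk]; ring)
    unfold psiN at h
    rw [hu.toGL_val, hu'.toGL_val] at h
    have h' := Units.ext h
    rw [← h']
    congr 1
    unfold T1
    rw [superdiag_one_add, superdiag_single i i' hii']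
    · simp [vecMulVec_apply]
    · intro k l _ hk
      simp [vecMulVec_apply, hk]
  have hstep : ∀ i i' : Fin n, (i' : ℕ) = i + 1 → σ i < σ i' →
      ((σ i' : Fin n) : ℕ) = σ i + 1 ∧ A i (σ i) = A i' (σ i') := by
    intro i i' hii' hlt
    have hr := hrel i i' hii' hlt
    have hnext : ((σ i' : Fin n) : ℕ) = σ i + 1 := by
      by_contra hcon
      obtain ⟨a, ha⟩ := hψ
      apply ha
      rw [hr a]
      unfold T1
      rw [superdiag_one_add, superdiag_eq_zero, AddChar.map_zero_eq_one]
      intro k l hkl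
      rw [vecMulVec_apply]
      by_cases hk : k = σ i
      · subst hk
        rw [Pi.single_eq_of_ne (i := σ i') (by rintro rfl; exact hcon hkl), mul_zero]
      · rw [Pi.single_eq_of_ne hk, zero_mul]
    refine ⟨hnext, ?_⟩
    have hr' : ∀ a : F, ψ a = ψ (a * A i' (σ i') / A i (σ i)) := by
      intro a
      rw [hr a]
      congr 1
      unfold T1
      rw [superdiag_one_add, superdiag_single (σ i) (σ i') hnext]
      · simp [vecMulVec_apply]
      · intro k l _ hk
        simp [vecMulVec_apply, hk]
    by_contra hcon
    obtain ⟨a, ha⟩ := hψ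
    apply ha
    have hd : A i (σ i) - A i' (σ i') ≠ 0 := sub_ne_zero.2 hcon
    have h3 := hr' (a * A i (σ i) / (A i (σ i) - A i' (σ i')))
    rw [← mul_inv_eq_one, ← AddChar.map_neg_eq_inv, ← AddChar.map_add_eq_mul] at h3
    rw [← h3]
    congr 1
    field_simp [hne i]
    ring
  -- apply the combinatorial lemma
  have hlay := layered (F := F) (n := n)
    (fun i => if h : i < n then ((Fin.rev (σ ⟨i, h⟩) : Fin n) : ℕ) else 0)
    (by intro i hi; simp only [hi, dif_pos]; exact (Fin.rev (σ ⟨i, hi⟩)).2)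
    (by
      intro i hi j hj hij
      simp only [hi, hj, dif_pos] at hij
      have := hσinj (Fin.rev_injective (Fin.ext hij))
      simpa using this)
    (by
      intro b hb
      obtain ⟨i, hi⟩ := hσsurj (Fin.rev ⟨b, hb⟩)
      refine ⟨i, i.2, ?_⟩
      simp [hi])
    (fun i => if h : i < n then A ⟨i, h⟩ (σ ⟨i, h⟩) else 0)
    (by
      intro i hi
      have hi' : i < n := by omega
      simp only [hi, hi', dif_pos]
      have hs := hstep ⟨i, hi'⟩ ⟨i + 1, hi⟩ rfl
      rcases lt_trichotomy (σ ⟨i, hi'⟩) (σ ⟨i + 1, hi⟩) with h | h | h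
      · right
        refine ⟨?_, (hs h).2⟩
        have := (hs h).1
        have h4 := (σ ⟨i + 1, hi⟩).2
        simp only [Fin.val_rev]
        omega
      · exfalso
        have := hσinj h
        simp at this
      · left
        rw [← Fin.lt_def]
        exact Fin.rev_lt_rev.2 h)
  have hlay' : ∀ i : Fin n, Fin.rev (σ (Fin.rev (σ i))) = i ∧
      A (Fin.rev (σ i)) (σ (Fin.rev (σ i))) = A i (σ i) := by
    intro i
    have := hlay i i.2
    have hlt : ((Fin.rev (σ i) : Fin n) : ℕ) < n := (Fin.rev (σ i)).2
    simp only [i.2, dif_pos, hlt, Fin.eta] at this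
    exact ⟨Fin.ext this.1, this.2⟩
  apply Units.ext
  ext i j
  rw [iota_val, ← hA]
  unfold iotaM
  by_cases hj : j = σ i
  · subst hj
    rw [← (hlay' i).2]
    congr 1
    rw [Fin.rev_eq_iff, ← (hlay' i).1]
    simp [(hlay' i).1]
  · rw [h1 i j hj]
    apply h1
    intro hcon
    apply hj
    have h3 := (hlay' (Fin.rev j)).1
    rw [← hcon, Fin.rev_rev] at h3
    exact (Fin.rev_injective h3).symm

end Gelfand


section MultOne
variable {n : ℕ} {V : Type*} [AddCommGroup V] [Module ℂ V]

noncomputable instance : Fintype (Un F n) := Fintype.ofFinite _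

/-- the idempotent attached to `ψ_n`. -/
noncomputable def eOp (ψ : AddChar F ℂˣ) (π : Representation ℂ (GL (Fin n) F) V) : V →ₗ[ℂ] V :=
  (Fintype.card (Un F n) : ℂ)⁻¹ • ∑ u : Un F n, (psiN ψ (u : GL (Fin n) F))⁻¹ • π u

variable (ψ : AddChar F ℂˣ) (π : Representation ℂ (GL (Fin n) F) V)

lemma cardUn_ne : (Fintype.card (Un F n) : ℂ) ≠ 0 := Nat.cast_ne_zero.2 Fintype.card_ne_zero

lemma eOp_mul {u : GL (Fin n) F} (hu : u ∈ Un F n) : eOp ψ π * π u = psiN ψ u • eOp ψ π := by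
  unfold eOp
  rw [smul_mul_assoc, Finset.sum_mul, smul_comm (psiN ψ u)]
  congr 1
  rw [Finset.smul_sum]
  apply Fintype.sum_equiv (Equiv.mulRight (⟨u, hu⟩ : Un F n))
  intro v
  simp only [Equiv.coe_mulRight, Subgroup.coe_mul]
  rw [smul_mul_assoc, ← map_mul, smul_smul, psiN_mul ψ v.2 hu]
  congr 1
  field_simp [psiN_ne_zero]

lemma mul_eOp {u : GL (Fin n) F} (hu : u ∈ Un F n) : π u * eOp ψ π = psiN ψ u • eOp ψ π := by
  unfold eOp
  rw [mul_smul_comm, Finset.mul_sum, smul_comm (psiN ψ u)]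
  congr 1
  rw [Finset.smul_sum]
  apply Fintype.sum_equiv (Equiv.mulLeft (⟨u, hu⟩ : Un F n))
  intro v
  simp only [Equiv.coe_mulLeft, Subgroup.coe_mul]
  rw [mul_smul_comm, ← map_mul, smul_smul, psiN_mul ψ hu v.2]
  congr 1
  field_simp [psiN_ne_zero]

lemma eOp_idem : eOp ψ π * eOp ψ π = eOp ψ π := by
  conv_lhs => enter [1]; unfold eOp
  rw [smul_mul_assoc, Finset.sum_mul]
  have : ∀ u : Un F n, (psiN ψ (u : GL (Fin n) F))⁻¹ • π u * eOp ψ π = eOp ψ π := by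
    intro u
    rw [smul_mul_assoc, mul_eOp ψ π u.2, smul_smul, inv_mul_cancel₀ (psiN_ne_zero _ _), one_smul]
  rw [Finset.sum_congr rfl fun u _ => this u, Finset.sum_const, Finset.card_univ,
    ← Nat.cast_smul_eq_nsmul ℂ, smul_smul, inv_mul_cancel₀ cardUn_ne, one_smul]

lemma whit_eOp {lam : V →ₗ[ℂ] ℂ} (h : IsWhittaker π (psiN ψ) lam) (v : V) :
    lam (eOp ψ π v) = lam v := by
  unfold eOp
  simp only [LinearMap.smul_apply, LinearMap.sum_apply, map_smul, map_sum, smul_eq_mul]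
  have : ∀ u : Un F n, (psiN ψ (u : GL (Fin n) F))⁻¹ * lam (π u v) = lam v := by
    intro u
    rw [h u u.2, ← mul_assoc, inv_mul_cancel₀ (psiN_ne_zero _ _), one_mul]
  rw [Finset.sum_congr rfl fun u _ => this u, Finset.sum_const, Finset.card_univ,
    nsmul_eq_mul, ← mul_assoc, inv_mul_cancel₀ cardUn_ne, one_mul]

/-- Hecke operators -/
noncomputable def TOp (g : GL (Fin n) F) : V →ₗ[ℂ] V := eOp ψ π * π g * eOp ψ π

lemma TOp_left {u : GL (Fin n) F} (hu : u ∈ Un F n) (g : GL (Fin n) F) :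
    TOp ψ π (u * g) = psiN ψ u • TOp ψ π g := by
  unfold TOp
  rw [map_mul, ← mul_assoc, eOp_mul ψ π hu, smul_mul_assoc, smul_mul_assoc]

lemma TOp_right {u : GL (Fin n) F} (hu : u ∈ Un F n) (g : GL (Fin n) F) :
    TOp ψ π (g * u) = psiN ψ u • TOp ψ π g := by
  unfold TOp
  rw [map_mul, mul_assoc, mul_assoc, mul_eOp ψ π hu, mul_smul_comm, mul_smul_comm, mul_assoc]

lemma TOp_zero {g u u' : GL (Fin n) F} (hu : u ∈ Un F n) (hu' : u' ∈ Un F n)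
    (h : u * g = g * u') (hne : psiN ψ u ≠ psiN ψ u') : TOp ψ π g = 0 := by
  have h1 := TOp_left ψ π hu g
  rw [h, TOp_right ψ π hu' g] at h1
  have : (psiN ψ u' - psiN ψ u) • TOp ψ π g = 0 := by rw [sub_smul, h1, sub_self]
  rcases smul_eq_zero.1 this with h2 | h2
  · exact absurd (sub_eq_zero.1 h2).symm hne
  · exact h2

lemma TOp_iota (hψ : ∃ a : F, ψ a ≠ 1) (g : GL (Fin n) F) : TOp ψ π (iota g) = TOp ψ π g := by
  obtain ⟨u, hu, u', hu', σ, h1, h2⟩ := bruhat g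
  have key : TOp ψ π (iota (u * g * u')) = TOp ψ π (u * g * u') := by
    by_cases hgood : ∀ v ∈ Un F n, ∀ v' ∈ Un F n, v * (u * g * u') = (u * g * u') * v' →
        psiN ψ v = psiN ψ v'
    · rw [mono_fixed ψ hψ _ σ h1 h2 hgood]
    · push Not at hgood
      obtain ⟨v, hv, v', hv', hvv, hne⟩ := hgood
      rw [TOp_zero ψ π hv hv' hvv hne]
      refine TOp_zero ψ π (iota_mem hv') (iota_mem hv) ?_ ?_
      · rw [← iota_mul, ← iota_mul, hvv]
      · rw [psiN_iota, psiN_iota]; exact hne.symm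
  rw [iota_mul, iota_mul, TOp_left ψ π (iota_mem hu'), TOp_right ψ π (iota_mem hu),
    TOp_right ψ π hu', TOp_left ψ π hu, psiN_iota, psiN_iota] at key
  have := smul_right_injective _ (psiN_ne_zero ψ u') key
  exact smul_right_injective _ (psiN_ne_zero ψ u) this

lemma TOp_mul (g h : GL (Fin n) F) : TOp ψ π g * TOp ψ π h =
    (Fintype.card (Un F n) : ℂ)⁻¹ • ∑ u : Un F n,
      (psiN ψ (u : GL (Fin n) F))⁻¹ • TOp ψ π (g * u * h) := by
  have h1 : TOp ψ π g * TOp ψ π h = eOp ψ π * π g * (eOp ψ π) * (π h * eOp ψ π) := by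
    unfold TOp
    calc _ = eOp ψ π * π g * (eOp ψ π * eOp ψ π) * (π h * eOp ψ π) := by simp only [mul_assoc]
      _ = _ := by rw [eOp_idem]
  rw [h1]
  conv_lhs => enter [1, 2]; unfold eOp
  rw [mul_smul_comm, smul_mul_assoc, Finset.mul_sum, Finset.sum_mul]
  congr 1
  refine Finset.sum_congr rfl fun u _ => ?_
  rw [mul_smul_comm, smul_mul_assoc]
  congr 1
  unfold TOp
  simp only [map_mul, mul_assoc]

lemma TOp_comm (hψ : ∃ a : F, ψ a ≠ 1) (g h : GL (Fin n) F) :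
    TOp ψ π g * TOp ψ π h = TOp ψ π h * TOp ψ π g := by
  rw [← TOp_iota ψ π hψ g, ← TOp_iota ψ π hψ h, TOp_mul, TOp_iota ψ π hψ g, TOp_iota ψ π hψ h,
    TOp_mul]
  congr 1
  refine Fintype.sum_bijective (fun u : Un F n => (⟨iota u, iota_mem u.2⟩ : Un F n)) ?_ _ _ ?_
  · refine Function.Involutive.bijective fun u => ?_
    simp [iota_iota]
  · intro u
    simp only [psiN_iota]
    rw [← TOp_iota ψ π hψ (h * _ * g)]
    simp only [iota_mul, iota_iota, mul_assoc]

lemma irr_top (hirr : IsIrreducible π) {v : V} (hv : v ≠ 0) (N : Submodule ℂ V)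
    (hN : ∀ h, π h v ∈ N) : N = ⊤ := by
  have h1 : Submodule.span ℂ (Set.range fun h => π h v) = ⊥ ∨
      Submodule.span ℂ (Set.range fun h => π h v) = ⊤ := by
    apply hirr
    intro g x hx
    induction hx using Submodule.span_induction with
    | mem x hx =>
      obtain ⟨h, rfl⟩ := hx
      apply Submodule.subset_span
      exact ⟨g * h, by simp [map_mul]⟩
    | zero => simp
    | add x y _ _ hx hy => rw [map_add]; exact Submodule.add_mem _ hx hy
    | smul c x _ hx => rw [map_smul]; exact Submodule.smul_mem _ _ hx
  rcases h1 with h1 | h1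
  · exfalso
    have : v ∈ Submodule.span ℂ (Set.range fun h => π h v) :=
      Submodule.subset_span ⟨1, by simp⟩
    rw [h1, Submodule.mem_bot] at this
    exact hv this
  · rw [eq_top_iff, ← h1, Submodule.span_le]
    rintro _ ⟨h, rfl⟩
    exact hN h

theorem mult_one [FiniteDimensional ℂ V] (hψ : ∃ a : F, ψ a ≠ 1) (hirr : IsIrreducible π)
    {l₁ l₂ : V →ₗ[ℂ] ℂ} (h₁ : IsWhittaker π (psiN ψ) l₁) (h₂ : IsWhittaker π (psiN ψ) l₂)
    (hne : l₁ ≠ 0) : ∃ c : ℂ, l₂ = c • l₁ := by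
  have hidem : ∀ x, eOp ψ π (eOp ψ π x) = eOp ψ π x := fun x =>
    LinearMap.congr_fun (eOp_idem ψ π) x
  obtain ⟨x0, hx0⟩ : ∃ x, l₁ x ≠ 0 := by
    by_contra hcon
    push Not at hcon
    exact hne (LinearMap.ext hcon)
  set v := eOp ψ π x0 with hv
  have hv0 : v ≠ 0 := by
    intro h0
    rw [← whit_eOp ψ π h₁, ← hv, h0, map_zero] at hx0
    exact hx0 rfl
  have hev : eOp ψ π v = v := hidem x0
  -- every Hecke operator is scalar on range of e
  have hscal : ∀ g, ∃ c : ℂ, TOp ψ π g v = c • v := by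
    intro g
    let E := LinearMap.range (eOp ψ π)
    have hmaps : ∀ x ∈ E, TOp ψ π g x ∈ E := by
      intro x _
      exact ⟨π g (eOp ψ π x), rfl⟩
    have : Nontrivial E := ⟨⟨⟨v, ⟨x0, rfl⟩⟩, 0, fun h => hv0 (congrArg Subtype.val h)⟩⟩
    obtain ⟨c, hc⟩ := Module.End.exists_eigenvalue ((TOp ψ π g).restrict hmaps)
    obtain ⟨⟨y, hyE⟩, hy⟩ := hc.exists_hasEigenvector
    have hy0 : y ≠ 0 := fun h => hy.2 (Subtype.ext h)
    have hyc : TOp ψ π g y = c • y := congrArg Subtype.val hy.apply_eq_smul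
    have hey : eOp ψ π y = y := by obtain ⟨z, rfl⟩ := hyE; exact hidem z
    refine ⟨c, ?_⟩
    have htop : LinearMap.ker (TOp ψ π g * eOp ψ π - c • eOp ψ π) = ⊤ := by
      apply irr_top π hirr hy0
      intro h
      rw [LinearMap.mem_ker, LinearMap.sub_apply, sub_eq_zero, LinearMap.smul_apply]
      have hTh : eOp ψ π (π h y) = TOp ψ π h y := by
        show _ = eOp ψ π (π h (eOp ψ π y)); rw [hey]
      show TOp ψ π g (eOp ψ π (π h y)) = _
      rw [hTh]
      have := LinearMap.congr_fun (TOp_comm ψ π hψ g h) y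
      calc TOp ψ π g (TOp ψ π h y) = TOp ψ π h (TOp ψ π g y) := this
        _ = _ := by rw [hyc, map_smul]
    have hvk : v ∈ LinearMap.ker (TOp ψ π g * eOp ψ π - c • eOp ψ π) := by
      rw [htop]; trivial
    rw [LinearMap.mem_ker, LinearMap.sub_apply, sub_eq_zero, LinearMap.smul_apply] at hvk
    have hvk' : TOp ψ π g (eOp ψ π v) = c • eOp ψ π v := hvk
    rwa [hev] at hvk'
  have htop : (Submodule.span ℂ {v}).comap (eOp ψ π) = ⊤ := by
    apply irr_top π hirr hv0
    intro h
    rw [Submodule.mem_comap]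
    have hTh : eOp ψ π (π h v) = TOp ψ π h v := by
      show _ = eOp ψ π (π h (eOp ψ π v)); rw [hev]
    obtain ⟨c, hc⟩ := hscal h
    rw [hTh, hc]
    exact Submodule.smul_mem _ _ (Submodule.mem_span_singleton_self v)
  have hl1v : l₁ v ≠ 0 := by rw [hv, whit_eOp ψ π h₁]; exact hx0
  refine ⟨l₂ v / l₁ v, LinearMap.ext fun x => ?_⟩
  have hx : x ∈ (Submodule.span ℂ {v}).comap (eOp ψ π) := by rw [htop]; trivial
  rw [Submodule.mem_comap, Submodule.mem_span_singleton] at hx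
  obtain ⟨c, hc⟩ := hx
  rw [LinearMap.smul_apply, ← whit_eOp ψ π h₁ x, ← whit_eOp ψ π h₂ x, ← hc, map_smul, map_smul]
  simp only [smul_eq_mul]
  field_simp

end MultOne


section Fourier

lemma psi_dot_sum (ψ : AddChar F ℂˣ) (hψ : ∃ a : F, ψ a ≠ 1) {ι : Type*} [Fintype ι]
    [DecidableEq ι] (y : ι → F) (hy : y ≠ 0) :
    ∑ a : ι → F, ((ψ (a ⬝ᵥ y) : ℂˣ) : ℂ) = 0 := by
  obtain ⟨c, hc⟩ := hψ
  obtain ⟨i, hi⟩ := Function.ne_iff.1 hy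
  have hi' : y i ≠ 0 := hi
  set a0 : ι → F := Pi.single i (c / y i) with ha0
  have h0 : a0 ⬝ᵥ y = c := by
    rw [ha0, single_dotProduct]; field_simp
  have h1 : ((ψ c : ℂˣ) : ℂ) * ∑ a : ι → F, ((ψ (a ⬝ᵥ y) : ℂˣ) : ℂ) =
      ∑ a : ι → F, ((ψ (a ⬝ᵥ y) : ℂˣ) : ℂ) := by
    rw [Finset.mul_sum]
    refine Fintype.sum_equiv (Equiv.addLeft a0) _ _ fun a => ?_
    rw [Equiv.coe_addLeft, add_dotProduct, h0, AddChar.map_add_eq_mul, Units.val_mul]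
  have h2 : ((ψ c : ℂˣ) : ℂ) - 1 ≠ 0 := by
    rw [sub_ne_zero]
    intro h
    exact hc (Units.ext h)
  have h3 : (((ψ c : ℂˣ) : ℂ) - 1) * ∑ a : ι → F, ((ψ (a ⬝ᵥ y) : ℂˣ) : ℂ) = 0 := by
    rw [sub_mul, h1, one_mul, sub_self]
  exact (mul_eq_zero.1 h3).resolve_left h2

end Fourier

section Blocks
variable {n a b : ℕ}

/-- index equivalence -/
def eqv (h : a + b = n) : Fin a ⊕ Fin b ≃ Fin n := finSumFinEquiv.trans (finCongr h)

@[simp] lemma eqv_inl (h : a + b = n) (i : Fin a) : ((eqv h (Sum.inl i) : Fin n) : ℕ) = i := by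
  simp [eqv]
@[simp] lemma eqv_inr (h : a + b = n) (i : Fin b) : ((eqv h (Sum.inr i) : Fin n) : ℕ) = a + i := by
  simp [eqv]

/-- block matrix -/
def blk (h : a + b = n) (A : Matrix (Fin a) (Fin a) F) (B : Matrix (Fin a) (Fin b) F)
    (C : Matrix (Fin b) (Fin a) F) (D : Matrix (Fin b) (Fin b) F) : Matrix (Fin n) (Fin n) F :=
  Matrix.reindex (eqv h) (eqv h) (Matrix.fromBlocks A B C D)

lemma blk_apply (h : a + b = n) (A : Matrix (Fin a) (Fin a) F) (B : Matrix (Fin a) (Fin b) F)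
    (C : Matrix (Fin b) (Fin a) F) (D : Matrix (Fin b) (Fin b) F) (i j : Fin a ⊕ Fin b) :
    blk h A B C D (eqv h i) (eqv h j) = Matrix.fromBlocks A B C D i j := by
  simp [blk]

lemma blk_mul (h : a + b = n) (A : Matrix (Fin a) (Fin a) F) (B : Matrix (Fin a) (Fin b) F)
    (C : Matrix (Fin b) (Fin a) F) (D : Matrix (Fin b) (Fin b) F)
    (A' : Matrix (Fin a) (Fin a) F) (B' : Matrix (Fin a) (Fin b) F)
    (C' : Matrix (Fin b) (Fin a) F) (D' : Matrix (Fin b) (Fin b) F) :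
    blk h A B C D * blk h A' B' C' D' =
      blk h (A * A' + B * C') (A * B' + B * D') (C * A' + D * C') (C * B' + D * D') := by
  unfold blk
  rw [Matrix.reindex_apply, Matrix.reindex_apply, Matrix.submatrix_mul_equiv,
    Matrix.fromBlocks_multiply]
  rfl

lemma blk_one (h : a + b = n) : blk h 1 0 0 1 = (1 : Matrix (Fin n) (Fin n) F) := by
  unfold blk
  simp [Matrix.fromBlocks_one]

end Blocks

section Spanning
variable {n : ℕ}

/-- elements of the unipotent group whose first `j` columns are trivial -/
def InT (j : ℕ) (u : GL (Fin n) F) : Prop :=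
  IsUnip F (u : Matrix (Fin n) (Fin n) F) ∧
    ∀ a b : Fin n, (b : ℕ) < j →
      (u : Matrix (Fin n) (Fin n) F) a b = (1 : Matrix (Fin n) (Fin n) F) a b

variable (F n) in
/-- submonoid of block elements `diag(g, 1)` -/
def EmbM (m : ℕ) : Submonoid (GL (Fin n) F) where
  carrier := {p | ∀ a b : Fin n, (m ≤ (a : ℕ) ∨ m ≤ (b : ℕ)) →
      (p : Matrix (Fin n) (Fin n) F) a b = (1 : Matrix (Fin n) (Fin n) F) a b}
  mul_mem' := by
    intro p q hp hq a b hab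
    rw [Units.val_mul, Matrix.mul_apply]
    rcases hab with h | h
    · rw [Finset.sum_eq_single a]
      · rw [hp a a (Or.inl h), hq a b (Or.inl h)]; simp
      · intro c _ hc
        rw [hp a c (Or.inl h), Matrix.one_apply_ne hc.symm, zero_mul]
      · simp
    · rw [Finset.sum_eq_single b]
      · rw [hq b b (Or.inr h), hp a b (Or.inr h)]; simp
      · intro c _ hc
        rw [hq c b (Or.inr h), Matrix.one_apply_ne hc, mul_zero]
      · simp
  one_mem' := by intro a b _; rfl

lemma EmbM_inv {m : ℕ} {p : GL (Fin n) F} (hp : p ∈ EmbM F n m) : p⁻¹ ∈ EmbM F n m :=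
  inv_mem_of_mul_closed _ hp

lemma EmbM_mono {m m' : ℕ} (h : m ≤ m') {p : GL (Fin n) F} (hp : p ∈ EmbM F n m) :
    p ∈ EmbM F n m' := fun a b hab => hp a b (by omega)

/-- extension by zero -/
def ext0 {j : ℕ} (y : Fin j → F) : Fin n → F := fun i => if h : (i : ℕ) < j then y ⟨i, h⟩ else 0

lemma ext0_of_le {j : ℕ} (y : Fin j → F) (i : Fin n) (h : j ≤ (i : ℕ)) : ext0 y i = 0 := by
  unfold ext0; rw [dif_neg (by omega)]

lemma ext0_add {j : ℕ} (y y' : Fin j → F) :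
    (ext0 (y + y') : Fin n → F) = ext0 y + ext0 y' := by
  ext i; simp only [ext0, Pi.add_apply]; split_ifs <;> simp

lemma ext0_zero {j : ℕ} : (ext0 (0 : Fin j → F) : Fin n → F) = 0 := by
  ext i; simp [ext0]

lemma ext0_dot {j : ℕ} (hj : j ≤ n) (y y' : Fin j → F) :
    (ext0 y : Fin n → F) ⬝ᵥ ext0 y' = y ⬝ᵥ y' := by
  unfold dotProduct
  symm
  refine Finset.sum_of_injOn (fun i : Fin j => (Fin.castLE hj i)) ?_ ?_ ?_ ?_
  · intro a _ b _ hab; simpa using hab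
  · intro a _; simp
  · intro i _ hi
    by_cases h : (i : ℕ) < j
    · exact absurd ⟨⟨i, h⟩, by simp, rfl⟩ hi
    · simp [ext0, h]
  · intro i _
    simp [ext0]

lemma ext0_restrict {j : ℕ} (hj : j ≤ n) (f : Fin n → F) (hf : ∀ i : Fin n, j ≤ (i : ℕ) → f i = 0) :
    ext0 (fun i : Fin j => f (Fin.castLE hj i)) = f := by
  ext i
  unfold ext0
  split_ifs with h
  · rfl
  · exact (hf i (by omega)).symm

lemma cM_unip (J : Fin n) (y : Fin (J : ℕ) → F) :
    IsUnip F (T1 (ext0 y) (Pi.single J 1) : Matrix (Fin n) (Fin n) F) := by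
  apply T1_isUnip
  intro i l hil
  by_cases hl : l = J
  · subst hl; rw [ext0_of_le y i hil, zero_mul]
  · rw [Pi.single_eq_of_ne hl, mul_zero]

/-- column elements -/
noncomputable def cG (J : Fin n) (y : Fin (J : ℕ) → F) : GL (Fin n) F :=
  toGL (T1 (ext0 y) (Pi.single J 1))

lemma cG_val (J : Fin n) (y : Fin (J : ℕ) → F) :
    (cG J y : Matrix (Fin n) (Fin n) F) = T1 (ext0 y) (Pi.single J 1) := (cM_unip J y).toGL_val

lemma cG_mem (J : Fin n) (y : Fin (J : ℕ) → F) : cG J y ∈ Un F n := by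
  rw [mem_Un, cG_val]; exact cM_unip J y

lemma cG_add (J : Fin n) (y y' : Fin (J : ℕ) → F) : cG J (y + y') = cG J y * cG J y' := by
  apply Units.ext
  rw [Units.val_mul, cG_val, cG_val, cG_val]
  unfold T1
  rw [ext0_add, Matrix.add_mul, Matrix.mul_add, Matrix.mul_add, vecMulVec_mul_vecMulVec,
    single_one_dotProduct, ext0_of_le y' J le_rfl, add_vecMulVec]
  simp [add_comm, add_left_comm]

lemma cG_zero (J : Fin n) : cG J (0 : Fin (J : ℕ) → F) = 1 := by
  apply Units.ext
  rw [cG_val, ext0_zero]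
  simp [T1]

lemma cG_neg (J : Fin n) (y : Fin (J : ℕ) → F) : cG J (-y) = (cG J y)⁻¹ := by
  rw [eq_inv_iff_mul_eq_one, ← cG_add, neg_add_cancel, cG_zero]

lemma cG_apply (J : Fin n) (y : Fin (J : ℕ) → F) (a b : Fin n) :
    (cG J y : Matrix (Fin n) (Fin n) F) a b = (1 : Matrix (Fin n) (Fin n) F) a b +
      ext0 y a * (Pi.single J 1 : Fin n → F) b := by
  rw [cG_val, T1, Matrix.add_apply, vecMulVec_apply]

lemma cG_mul_apply (J : Fin n) (y : Fin (J : ℕ) → F) (M : Matrix (Fin n) (Fin n) F) (a b : Fin n) :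
    ((cG J y : Matrix (Fin n) (Fin n) F) * M) a b = M a b + ext0 y a * M J b := by
  rw [cG_val]
  simp [T1, Matrix.add_mul, vecMulVec_mul, vecMulVec_apply]

lemma mul_cG_apply (J : Fin n) (y : Fin (J : ℕ) → F) (M : Matrix (Fin n) (Fin n) F) (a b : Fin n) :
    (M * (cG J y : Matrix (Fin n) (Fin n) F)) a b =
      M a b + (M *ᵥ ext0 y) a * (Pi.single J 1 : Fin n → F) b := by
  rw [cG_val]
  simp [T1, Matrix.mul_add, mul_vecMulVec, vecMulVec_apply]

lemma psiN_cG (ψ : AddChar F ℂˣ) (J j0 : Fin n) (h : (J : ℕ) = j0 + 1) (y : Fin (J : ℕ) → F) :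
    psiN ψ (cG J y) = ψ (ext0 y j0) := by
  unfold psiN
  rw [cG_val, T1, superdiag_one_add, superdiag_single j0 J h]
  · simp [vecMulVec_apply]
  · intro i l hil hi
    rw [vecMulVec_apply]
    have : l ≠ J := by
      rintro rfl
      exact hi (Fin.ext (by omega))
    rw [Pi.single_eq_of_ne this, mul_zero]

/-- decomposition of `T_J`. -/
lemma InT_decomp (J : Fin n) {u : GL (Fin n) F} (hu : InT (J : ℕ) u) :
    ∃ (y : Fin (J : ℕ) → F) (t : GL (Fin n) F), u = cG J y * t ∧ InT ((J : ℕ) + 1) t ∧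
      ∀ a b : Fin n, (t : Matrix (Fin n) (Fin n) F) a b =
        (u : Matrix (Fin n) (Fin n) F) a b - ext0 y a * (u : Matrix (Fin n) (Fin n) F) J b := by
  let y : Fin (J : ℕ) → F := fun i => (u : Matrix (Fin n) (Fin n) F) (Fin.castLE J.2.le i) J
  have hent : ∀ a b : Fin n, ((cG J (-y) * u : GL (Fin n) F) : Matrix (Fin n) (Fin n) F) a b =
        (u : Matrix (Fin n) (Fin n) F) a b - ext0 y a * (u : Matrix (Fin n) (Fin n) F) J b := by
    intro a b
    rw [Units.val_mul, cG_mul_apply]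
    have : (ext0 (-y) : Fin n → F) a = - ext0 y a := by
      unfold ext0; split_ifs <;> simp
    rw [this]; ring
  refine ⟨y, cG J (-y) * u, ?_, ⟨?_, ?_⟩, hent⟩
  · rw [← mul_assoc, ← cG_add, add_neg_cancel, cG_zero, one_mul]
  · exact (Un F n).mul_mem (cG_mem J _) hu.1
  · intro a b hb
    rw [hent]
    rcases Nat.lt_succ_iff_lt_or_eq.1 hb with h | h
    · have hJb : J ≠ b := by rintro rfl; omega
      rw [hu.2 a b h, hu.2 J b h, Matrix.one_apply_ne hJb]; ring
    · obtain rfl : b = J := Fin.ext h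
      rw [hu.1.1 b]
      rcases lt_trichotomy (a : ℕ) b with h1 | h1 | h1
      · have : a ≠ b := by rintro rfl; omega
        rw [Matrix.one_apply_ne this]
        simp [ext0, h1, y, Fin.castLE]
      · obtain rfl : a = b := Fin.ext h1
        rw [ext0_of_le y a le_rfl, hu.1.1 a]; simp
      · have : a ≠ b := by rintro rfl; omega
        rw [Matrix.one_apply_ne this, ext0_of_le y a h1.le, hu.1.2 a b h1]; simp

lemma InT_conj_c (J : Fin n) (y : Fin (J : ℕ) → F) {t : GL (Fin n) F}
    (ht : InT ((J : ℕ) + 1) t) : InT ((J : ℕ) + 1) (cG J y * t * (cG J y)⁻¹) := by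
  refine ⟨(Un F n).mul_mem ((Un F n).mul_mem (cG_mem J _) ht.1) ((Un F n).inv_mem (cG_mem J _)), ?_⟩
  intro a b hb
  have ht' : ∀ (z : Fin (J : ℕ) → F), (t : Matrix (Fin n) (Fin n) F) *ᵥ ext0 z = ext0 z := by
    intro z
    ext c
    conv_rhs => rw [← Matrix.one_mulVec (ext0 z : Fin n → F)]
    unfold Matrix.mulVec dotProduct
    refine Finset.sum_congr rfl fun l _ => ?_
    by_cases hl : (l : ℕ) < J
    · exact congrArg (· * _) (ht.2 c l (by omega))
    · rw [ext0_of_le z l (by omega)]; simp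
  have h1 : ((cG J y * t * (cG J y)⁻¹ : GL (Fin n) F) : Matrix (Fin n) (Fin n) F) a b =
      (t : Matrix (Fin n) (Fin n) F) a b + ext0 y a * ((t : Matrix (Fin n) (Fin n) F) J b
        - (Pi.single J 1 : Fin n → F) b) := by
    rw [← cG_neg, mul_assoc, Units.val_mul, cG_mul_apply, Units.val_mul, mul_cG_apply,
      mul_cG_apply, ht']
    have h2 : ∀ c, (ext0 (-y) : Fin n → F) c = - ext0 y c := by
      intro c; unfold ext0; split_ifs <;> simp
    rw [h2, h2, ext0_of_le y J le_rfl]; ring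
  rw [h1, ht.2 a b hb, ht.2 J b hb]
  have : (1 : Matrix (Fin n) (Fin n) F) J b = (Pi.single J 1 : Fin n → F) b := by
    rw [Matrix.one_apply, Pi.single_apply]; simp [eq_comm]
  rw [this]; ring

lemma InT_conj_g (J : Fin n) {g t : GL (Fin n) F} (hg : g ∈ EmbM F n (J : ℕ))
    (ht : InT ((J : ℕ) + 1) t) :
    InT ((J : ℕ) + 1) (g⁻¹ * t * g) ∧ ∀ ψ : AddChar F ℂˣ, psiN ψ (g⁻¹ * t * g) = psiN ψ t := by
  set D : Matrix (Fin n) (Fin n) F := (t : Matrix (Fin n) (Fin n) F) - 1 with hD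
  have hg' := EmbM_inv hg
  have hDz : ∀ a b : Fin n, (b : ℕ) < J + 1 → D a b = 0 := by
    intro a b hb
    rw [hD, Matrix.sub_apply, ht.2 a b hb, sub_self]
  have hDg : D * (g : Matrix (Fin n) (Fin n) F) = D := by
    conv_rhs => rw [← Matrix.mul_one D]
    ext a b
    rw [Matrix.mul_apply, Matrix.mul_apply]
    refine Finset.sum_congr rfl fun l _ => ?_
    by_cases hl : (l : ℕ) < J + 1
    · rw [hDz a l hl]; simp
    · rw [hg l b (Or.inl (by omega))]
  have hval : ((g⁻¹ * t * g : GL (Fin n) F) : Matrix (Fin n) (Fin n) F) =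
      1 + ((g⁻¹ : GL (Fin n) F) : Matrix (Fin n) (Fin n) F) * D := by
    have ht1 : (t : Matrix (Fin n) (Fin n) F) = 1 + D := by rw [hD]; abel
    rw [Units.val_mul, Units.val_mul, ht1, Matrix.mul_add, Matrix.add_mul, Matrix.mul_assoc _ D,
      hDg, Matrix.mul_one, ← Units.val_mul, inv_mul_cancel, Units.val_one]
  set E := ((g⁻¹ : GL (Fin n) F) : Matrix (Fin n) (Fin n) F) * D with hE
  have hEz : ∀ a b : Fin n, (b : ℕ) < J + 1 → E a b = 0 := by
    intro a b hb
    rw [hE, Matrix.mul_apply]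
    exact Finset.sum_eq_zero fun l _ => by rw [hDz l b hb, mul_zero]
  have hEr : ∀ a b : Fin n, (J : ℕ) ≤ a → E a b = D a b := by
    intro a b ha
    rw [hE]
    conv_rhs => rw [← Matrix.one_mul D]
    rw [Matrix.mul_apply, Matrix.mul_apply]
    refine Finset.sum_congr rfl fun l _ => ?_
    rw [hg' a l (Or.inl ha)]
  have hSU : SU E := by
    intro a b hab
    by_cases hb : (b : ℕ) < J + 1
    · exact hEz a b hb
    · rw [hEr a b (by omega)]
      exact ht.1.su a b hab
  refine ⟨⟨?_, ?_⟩, ?_⟩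
  · rw [hval]; exact isUnip_one_add hSU
  · intro a b hb
    rw [hval, Matrix.add_apply, hEz a b hb, add_zero]
  · intro ψ
    unfold psiN
    congr 2
    rw [hval]
    apply superdiag_congr
    intro a b hab
    have ht1 : (t : Matrix (Fin n) (Fin n) F) = 1 + D := by rw [hD]; abel
    rw [ht1, Matrix.add_apply, Matrix.add_apply]
    congr 1
    by_cases hb : (b : ℕ) < J + 1
    · rw [hEz a b hb, hDz a b hb]
    · exact hEr a b (by omega)

lemma cG_conj_g (J : Fin n) {g : GL (Fin n) F} (hg : g ∈ EmbM F n (J : ℕ))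
    (y : Fin (J : ℕ) → F) : ∃ y' : Fin (J : ℕ) → F, g⁻¹ * cG J y * g = cG J y' ∧
      (ext0 y' : Fin n → F) = ((g⁻¹ : GL (Fin n) F) : Matrix (Fin n) (Fin n) F) *ᵥ ext0 y := by
  have hg' := EmbM_inv hg
  let f : Fin n → F := ((g⁻¹ : GL (Fin n) F) : Matrix (Fin n) (Fin n) F) *ᵥ ext0 y
  have hf : ext0 (fun i : Fin (J : ℕ) => f (Fin.castLE J.2.le i)) = f := by
    apply ext0_restrict
    intro i hi
    have : f i = ((1 : Matrix (Fin n) (Fin n) F) *ᵥ ext0 y) i := by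
      simp only [f]
      unfold Matrix.mulVec dotProduct
      refine Finset.sum_congr rfl fun l _ => ?_
      exact congrArg (· * _) (hg' i l (Or.inl hi))
    rw [this, Matrix.one_mulVec, ext0_of_le y i hi]
  refine ⟨fun i => f (Fin.castLE J.2.le i), ?_, hf⟩
  apply Units.ext
  rw [cG_val, hf, Units.val_mul, Units.val_mul, cG_val]
  unfold T1
  rw [Matrix.mul_add, Matrix.add_mul, Matrix.mul_one, ← Units.val_mul, inv_mul_cancel,
    Units.val_one, mul_vecMulVec, vecMulVec_mul, single_one_vecMul]
  congr 2
  ext b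
  show (g : Matrix (Fin n) (Fin n) F) J b = _
  rw [hg J b (Or.inl le_rfl), Matrix.one_apply, Pi.single_apply]
  simp [eq_comm]

lemma exists_row (J j0 : Fin n) (h : (J : ℕ) = j0 + 1) (a : Fin (J : ℕ) → F) (ha : a ≠ 0) :
    ∃ g ∈ EmbM F n (J : ℕ), ∀ b, (g : Matrix (Fin n) (Fin n) F) j0 b = ext0 a b := by
  obtain ⟨i, hi⟩ := Function.ne_iff.1 ha
  let i0 : Fin n := Fin.castLE J.2.le i
  have hi0J : (i0 : ℕ) < J := i.2
  have hi0 : (ext0 a : Fin n → F) i0 ≠ 0 := by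
    have : (ext0 a : Fin n → F) i0 = a i := by simp [ext0, i0]
    rw [this]; exact hi
  let P : Matrix (Fin n) (Fin n) F := (1 : Matrix (Fin n) (Fin n) F).updateRow i0 (ext0 a)
  have hPdet : P.det = ext0 a i0 := by
    have h1 := Matrix.det_updateRow_sum (1 : Matrix (Fin n) (Fin n) F) i0 (ext0 a)
    have h2 : (∑ k, (ext0 a : Fin n → F) k • (1 : Matrix (Fin n) (Fin n) F) k) = ext0 a := by
      ext b
      simp [Finset.sum_apply, Matrix.one_apply]
    rw [h2] at h1
    simpa using h1
  let s := Equiv.swap i0 j0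
  have hdet : (P.submatrix s id).det ≠ 0 := by
    rw [Matrix.det_permute, hPdet]
    refine mul_ne_zero ?_ hi0
    rcases Int.units_eq_one_or (Equiv.Perm.sign s) with h | h <;> rw [h] <;> simp
  have hPa : ∀ c b : Fin n, c ≠ i0 → P c b = (1 : Matrix (Fin n) (Fin n) F) c b := by
    intro c b hc
    simp only [P]
    rw [Matrix.updateRow_ne hc]
  have hPi : ∀ b : Fin n, P i0 b = ext0 a b := by
    intro b
    simp only [P]
    rw [Matrix.updateRow_self]
  have hfix : ∀ c : Fin n, (J : ℕ) ≤ c → s c = c := by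
    intro c hc
    apply Equiv.swap_apply_of_ne_of_ne
    · rintro rfl; omega
    · rintro rfl; omega
  refine ⟨toGL (P.submatrix s id), ?_, ?_⟩
  · intro c b hcb
    rw [toGL_val hdet, Matrix.submatrix_apply, id]
    by_cases hc : s c = i0
    · have hcj : c = j0 := by
        have h3 := Equiv.swap_apply_self i0 j0 c
        rw [show Equiv.swap i0 j0 c = i0 from hc, Equiv.swap_apply_left] at h3
        exact h3.symm
      subst hcj
      have hb : (J : ℕ) ≤ b := by omega
      rw [hc, hPi, ext0_of_le a b hb, Matrix.one_apply_ne]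
      rintro rfl; omega
    · rw [hPa _ _ hc]
      rcases hcb with h1 | h1
      · rw [hfix c h1]
      · rw [Matrix.one_apply, Matrix.one_apply]
        congr 1
        conv_lhs => rw [← hfix b h1]
        rw [s.injective.eq_iff]
  · intro b
    rw [toGL_val hdet, Matrix.submatrix_apply, id]
    rw [show s j0 = i0 from Equiv.swap_apply_right i0 j0, hPi]

end Spanning


section SpanStep
variable {n : ℕ} {V : Type*} [AddCommGroup V] [Module ℂ V]
variable (ψ : AddChar F ℂˣ) (π : Representation ℂ (GL (Fin n) F) V)

/-- equivariance under the group of unipotents with trivial first `j` columns -/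
def EqT (j : ℕ) (l : V →ₗ[ℂ] ℂ) : Prop :=
  ∀ u : GL (Fin n) F, InT j u → ∀ v, l (π u v) = psiN ψ u * l v

/-- Fourier component -/
noncomputable def lA (J : Fin n) (l : V →ₗ[ℂ] ℂ) (a : Fin (J : ℕ) → F) : V →ₗ[ℂ] ℂ :=
  ∑ y : Fin (J : ℕ) → F, ((ψ (-(a ⬝ᵥ y)) : ℂˣ) : ℂ) • (l ∘ₗ π (cG J y))

lemma lA_apply (J : Fin n) (l : V →ₗ[ℂ] ℂ) (a : Fin (J : ℕ) → F) (v : V) :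
    lA ψ π J l a v = ∑ y : Fin (J : ℕ) → F, ((ψ (-(a ⬝ᵥ y)) : ℂˣ) : ℂ) * l (π (cG J y) v) := by
  simp [lA, LinearMap.sum_apply]

lemma lA_c (J : Fin n) (l : V →ₗ[ℂ] ℂ) (a y0 : Fin (J : ℕ) → F) (v : V) :
    lA ψ π J l a (π (cG J y0) v) = ((ψ (a ⬝ᵥ y0) : ℂˣ) : ℂ) * lA ψ π J l a v := by
  rw [lA_apply, lA_apply, Finset.mul_sum]
  refine Fintype.sum_equiv (Equiv.addRight y0) _ _ fun y => ?_
  rw [Equiv.coe_addRight, cG_add, map_mul, Module.End.mul_apply, ← mul_assoc, ← Units.val_mul,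
    ← AddChar.map_add_eq_mul, dotProduct_add]
  congr 4
  ring

lemma lA_t (J : Fin n) {l : V →ₗ[ℂ] ℂ} (hl : EqT ψ π ((J : ℕ) + 1) l) (a : Fin (J : ℕ) → F)
    {t : GL (Fin n) F} (ht : InT ((J : ℕ) + 1) t) (v : V) :
    lA ψ π J l a (π t v) = psiN ψ t * lA ψ π J l a v := by
  rw [lA_apply, lA_apply, Finset.mul_sum]
  refine Finset.sum_congr rfl fun y _ => ?_
  have h1 : π (cG J y) (π t v) = π (cG J y * t * (cG J y)⁻¹) (π (cG J y) v) := by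
    rw [← Module.End.mul_apply, ← Module.End.mul_apply, ← map_mul, ← map_mul,
      inv_mul_cancel_right]
  have h2 : psiN ψ (cG J y * t * (cG J y)⁻¹) = psiN ψ t := by
    rw [psiN_mul ψ ((Un F n).mul_mem (cG_mem J y) ht.1) ((Un F n).inv_mem (cG_mem J y)),
      psiN_mul ψ (cG_mem J y) ht.1, psiN_inv ψ (cG_mem J y)]
    have := psiN_ne_zero ψ (cG J y)
    field_simp
  rw [h1, hl _ (InT_conj_c J y ht), h2]
  ring

lemma lA_sum (hψ : ∃ a : F, ψ a ≠ 1) (J : Fin n) (l : V →ₗ[ℂ] ℂ) :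
    ∑ a, lA ψ π J l a = (Fintype.card (Fin (J : ℕ) → F) : ℂ) • l := by
  ext v
  rw [LinearMap.sum_apply]
  simp_rw [lA_apply]
  rw [Finset.sum_comm]
  simp_rw [← Finset.sum_mul]
  rw [Finset.sum_eq_single 0]
  · simp [cG_zero]
  · intro y _ hy
    have := psi_dot_sum ψ hψ (-y) (by simpa using hy)
    simp_rw [dotProduct_neg] at this
    rw [this, zero_mul]
  · simp

lemma lA_zero (J : Fin n) (hJ : 1 ≤ (J : ℕ)) (hc : IsCuspidal π) {l : V →ₗ[ℂ] ℂ}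
    (hl : EqT ψ π ((J : ℕ) + 1) l) : lA ψ π J l 0 = 0 := by
  ext v
  have hJn := J.2
  have h : (J : ℕ) + (n - J) = n := by omega
  have hcu := hc J (n - J) hJ (by omega) h
  have hinv : ∀ x : Matrix (Fin (J : ℕ)) (Fin (n - J)) F,
      lA ψ π J l 0 (π (toGL (blk h 1 x 0 1)) v) = lA ψ π J l 0 v := by
    intro x
    have hval : ((toGL (blk h 1 x 0 1) : GL (Fin n) F) : Matrix (Fin n) (Fin n) F) =
        blk h 1 x 0 1 := by
      apply toGL_val' (N := blk h 1 (-x) 0 1)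
      rw [blk_mul, ← blk_one h]; simp
    have hcol : ∀ a b : Fin n, (b : ℕ) < J →
        blk h 1 x 0 1 a b = (1 : Matrix (Fin n) (Fin n) F) a b := by
      intro a b hb
      rw [← blk_one h]
      obtain ⟨a, rfl⟩ := (eqv h).surjective a
      obtain ⟨b, rfl⟩ := (eqv h).surjective b
      rw [blk_apply, blk_apply]
      rcases b with b | b
      · rcases a with a | a <;> simp
      · simp at hb
    have hrow : ∀ a b : Fin n, (J : ℕ) ≤ a →
        blk h 1 x 0 1 a b = (1 : Matrix (Fin n) (Fin n) F) a b := by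
      intro a b ha
      rw [← blk_one h]
      obtain ⟨a, rfl⟩ := (eqv h).surjective a
      obtain ⟨b, rfl⟩ := (eqv h).surjective b
      rw [blk_apply, blk_apply]
      rcases a with a | a
      · have := a.2
        simp at ha; omega
      · rcases b with b | b <;> simp
    have hu : InT (J : ℕ) (toGL (blk h 1 x 0 1) : GL (Fin n) F) := by
      refine ⟨?_, ?_⟩
      · rw [hval]
        refine ⟨fun i => ?_, fun i j hij => ?_⟩
        · by_cases hi : (i : ℕ) < J
          · rw [hcol i i hi]; simp
          · rw [hrow i i (by omega)]; simp
        · have hne : i ≠ j := by rintro rfl; omega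
          by_cases hj : (j : ℕ) < J
          · rw [hcol i j hj, Matrix.one_apply_ne hne]
          · rw [hrow i j (by omega), Matrix.one_apply_ne hne]
      · rw [hval]; exact hcol
    obtain ⟨y, t, hut, ht, hent⟩ := InT_decomp J hu
    have hpsi : psiN ψ t = 1 := by
      unfold psiN
      rw [superdiag_eq_zero]
      · simp
      · intro a b hab
        have hne : a ≠ b := by rintro rfl; omega
        by_cases ha : (a : ℕ) < J
        · rw [ht.2 a b (by omega), Matrix.one_apply_ne hne]
        · rw [hent, hval, hrow a b (by omega), Matrix.one_apply_ne hne, ext0_of_le y a (by omega)]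
          simp
    rw [hut, map_mul, Module.End.mul_apply, lA_c, lA_t ψ π J hl 0 ht, hpsi]
    simp
  have h1 : ∑ x : Matrix (Fin (J : ℕ)) (Fin (n - J)) F,
      lA ψ π J l 0 (π (toGL (blk h 1 x 0 1)) v) = 0 := by
    rw [← map_sum, ← LinearMap.sum_apply]
    have : ∑ x : Matrix (Fin (J : ℕ)) (Fin (n - J)) F, π (toGL (blk h 1 x 0 1)) = 0 := hcu
    rw [this]; simp
  simp_rw [hinv] at h1
  rw [Finset.sum_const, nsmul_eq_mul] at h1
  have hcard : ((Finset.univ : Finset (Matrix (Fin (J : ℕ)) (Fin (n - J)) F)).card : ℂ) ≠ 0 := by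
    rw [Nat.cast_ne_zero, Finset.card_univ]; exact Fintype.card_ne_zero
  simpa using (mul_eq_zero.1 h1).resolve_left hcard

lemma lA_shift (J j0 : Fin n) (h : (J : ℕ) = j0 + 1) {l : V →ₗ[ℂ] ℂ}
    (hl : EqT ψ π ((J : ℕ) + 1) l) (a : Fin (J : ℕ) → F) {g : GL (Fin n) F}
    (hg : g ∈ EmbM F n (J : ℕ))
    (hrow : ∀ b, (g : Matrix (Fin n) (Fin n) F) j0 b = ext0 a b) :
    EqT ψ π (J : ℕ) (lA ψ π J l a ∘ₗ π g⁻¹) := by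
  intro u hu v
  obtain ⟨y, t, hut, ht, -⟩ := InT_decomp J hu
  obtain ⟨y', hy', hy''⟩ := cG_conj_g J hg y
  obtain ⟨ht', hpt⟩ := InT_conj_g J hg ht
  have e : g⁻¹ * u = cG J y' * (g⁻¹ * t * g) * g⁻¹ := by
    rw [hut, ← hy']; group
  rw [LinearMap.comp_apply, LinearMap.comp_apply, ← Module.End.mul_apply, ← map_mul, e, map_mul,
    map_mul, Module.End.mul_apply, Module.End.mul_apply, lA_c, lA_t ψ π J hl a ht', hpt, hut,
    psiN_mul ψ (cG_mem J y) ht.1, psiN_cG ψ J j0 h, mul_assoc]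
  congr 3
  rw [← ext0_dot J.2.le a y', hy'']
  have h1 : (ext0 a : Fin n → F) = Pi.single j0 1 ᵥ* (g : Matrix (Fin n) (Fin n) F) := by
    rw [single_one_vecMul]
    ext b; exact (hrow b).symm
  rw [h1, ← Matrix.dotProduct_mulVec, Matrix.mulVec_mulVec, ← Units.val_mul, mul_inv_cancel,
    Units.val_one, Matrix.one_mulVec, single_one_dotProduct]

lemma span_step (hψ : ∃ a : F, ψ a ≠ 1) (hc : IsCuspidal π) (J j0 : Fin n)
    (h : (J : ℕ) = j0 + 1) {l : V →ₗ[ℂ] ℂ} (hl : EqT ψ π ((J : ℕ) + 1) l)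
    (S : Submodule ℂ (V →ₗ[ℂ] ℂ))
    (hS : ∀ l', EqT ψ π (J : ℕ) l' → ∀ g ∈ EmbM F n (J : ℕ), l' ∘ₗ π g ∈ S) : l ∈ S := by
  have hcard : (Fintype.card (Fin (J : ℕ) → F) : ℂ) ≠ 0 :=
    Nat.cast_ne_zero.2 Fintype.card_ne_zero
  have h1 : ∑ a, lA ψ π J l a ∈ S := by
    refine Submodule.sum_mem _ fun a _ => ?_
    by_cases ha : a = 0
    · rw [ha, lA_zero ψ π J (by omega) hc hl]; exact S.zero_mem
    · obtain ⟨g, hg, hrow⟩ := exists_row J j0 h a ha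
      have := hS _ (lA_shift ψ π J j0 h hl a hg hrow) g hg
      rwa [LinearMap.comp_assoc, ← Module.End.mul_eq_comp, ← map_mul, inv_mul_cancel, map_one,
        Module.End.one_eq_id, LinearMap.comp_id] at this
  rw [lA_sum ψ π hψ] at h1
  exact (S.smul_mem_iff hcard).1 h1

theorem spanning (hψ : ∃ a : F, ψ a ≠ 1) (hc : IsCuspidal π) (j : ℕ) :
    ∀ (_ : j < n) (l : V →ₗ[ℂ] ℂ) (_ : EqT ψ π (j + 1) l),
      l ∈ Submodule.span ℂ {l' : V →ₗ[ℂ] ℂ | ∃ lam : V →ₗ[ℂ] ℂ, IsWhittaker π (psiN ψ) lam ∧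
        ∃ p ∈ EmbM F n j, l' = lam ∘ₗ π p} := by
  induction j with
  | zero =>
    intro hj l hl
    apply Submodule.subset_span
    refine ⟨l, ?_, 1, one_mem _, by rw [map_one, Module.End.one_eq_id, LinearMap.comp_id]⟩
    intro u hu v
    refine hl u ⟨hu, ?_⟩ v
    intro a b hb
    by_cases hab : a = b
    · subst hab; rw [hu.1 a]; simp
    · rw [Matrix.one_apply_ne hab, hu.2 a b]
      have : (a : ℕ) ≠ b := fun h => hab (Fin.ext h)
      omega
  | succ j ih =>
    intro hj l hl
    refine span_step ψ π hψ hc ⟨j + 1, hj⟩ ⟨j, by omega⟩ rfl hl _ ?_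
    intro l' hl' g hg
    have h1 := ih (by omega) l' hl'
    have h2 := Submodule.mem_map_of_mem (f := LinearMap.lcomp ℂ ℂ (π g)) h1
    rw [Submodule.map_span] at h2
    refine Submodule.span_mono ?_ h2
    rintro _ ⟨_, ⟨lam, hlam, p, hp, rfl⟩, rfl⟩
    refine ⟨lam, hlam, p * g, mul_mem (EmbM_mono (Nat.le_succ j) hp) hg, ?_⟩
    rw [map_mul]
    rfl

end SpanStep


section Elements
variable {n a b : ℕ}

/-- `diag(g, 1)` -/
noncomputable def emb (h : a + b = n) : GL (Fin a) F →* GL (Fin n) F :=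
  Units.map
    { toFun := fun A => blk h A 0 0 1
      map_one' := blk_one h
      map_mul' := fun A B => by rw [blk_mul]; simp }

lemma emb_val (h : a + b = n) (g : GL (Fin a) F) :
    (emb h g : Matrix (Fin n) (Fin n) F) = blk h (g : Matrix (Fin a) (Fin a) F) 0 0 1 := rfl

/-- lower unipotent -/
def XG (h : a + b = n) (x : Matrix (Fin b) (Fin a) F) : GL (Fin n) F :=
  ⟨blk h 1 0 x 1, blk h 1 0 (-x) 1, by rw [blk_mul, ← blk_one h]; simp,
    by rw [blk_mul, ← blk_one h]; simp⟩

lemma XG_val (h : a + b = n) (x : Matrix (Fin b) (Fin a) F) :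
    (XG h x : Matrix (Fin n) (Fin n) F) = blk h 1 0 x 1 := rfl

lemma XG_add (h : a + b = n) (x x' : Matrix (Fin b) (Fin a) F) :
    XG h (x + x') = XG h x * XG h x' := by
  apply Units.ext
  rw [Units.val_mul, XG_val, XG_val, XG_val, blk_mul]
  simp

/-- rectangular-block version of `B` -/
noncomputable def BG (h : a + b = n) (h' : b + a = n) (g : GL (Fin a) F)
    (y : Matrix (Fin a) (Fin b) F) : GL (Fin n) F :=
  ⟨Matrix.reindex (eqv h') (eqv h) (Matrix.fromBlocks 0 1 (g : Matrix (Fin a) (Fin a) F) y),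
   Matrix.reindex (eqv h) (eqv h') (Matrix.fromBlocks
    (-(((g⁻¹ : GL (Fin a) F) : Matrix (Fin a) (Fin a) F) * y))
    ((g⁻¹ : GL (Fin a) F) : Matrix (Fin a) (Fin a) F) 1 0),
   by
    rw [Matrix.reindex_apply, Matrix.reindex_apply, Matrix.submatrix_mul_equiv,
      Matrix.fromBlocks_multiply, ← blk_one h', Matrix.mul_neg, ← Matrix.mul_assoc,
      ← Units.val_mul, mul_inv_cancel]
    simp [blk],
   by
    rw [Matrix.reindex_apply, Matrix.reindex_apply, Matrix.submatrix_mul_equiv,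
      Matrix.fromBlocks_multiply, ← blk_one h, ← Units.val_mul, inv_mul_cancel]
    simp [blk]⟩

lemma BG_val (h : a + b = n) (h' : b + a = n) (g : GL (Fin a) F)
    (y : Matrix (Fin a) (Fin b) F) : (BG h h' g y : Matrix (Fin n) (Fin n) F) =
    Matrix.reindex (eqv h') (eqv h) (Matrix.fromBlocks 0 1 (g : Matrix (Fin a) (Fin a) F) y) := rfl

lemma BG_mul_blk (h : a + b = n) (h' : b + a = n) (g : GL (Fin a) F)
    (y : Matrix (Fin a) (Fin b) F)
    (A : Matrix (Fin a) (Fin a) F) (B : Matrix (Fin a) (Fin b) F)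
    (C : Matrix (Fin b) (Fin a) F) (D : Matrix (Fin b) (Fin b) F) :
    (BG h h' g y : Matrix (Fin n) (Fin n) F) * blk h A B C D =
      Matrix.reindex (eqv h') (eqv h) (Matrix.fromBlocks C D
        ((g : Matrix (Fin a) (Fin a) F) * A + y * C)
        ((g : Matrix (Fin a) (Fin a) F) * B + y * D)) := by
  rw [BG_val]
  unfold blk
  rw [Matrix.reindex_apply, Matrix.reindex_apply, Matrix.submatrix_mul_equiv,
    Matrix.fromBlocks_multiply]
  simp

lemma blk_mul_BG (h : a + b = n) (h' : b + a = n) (g : GL (Fin a) F)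
    (y : Matrix (Fin a) (Fin b) F)
    (A : Matrix (Fin b) (Fin b) F) (B : Matrix (Fin b) (Fin a) F)
    (C : Matrix (Fin a) (Fin b) F) (D : Matrix (Fin a) (Fin a) F) :
    blk h' A B C D * (BG h h' g y : Matrix (Fin n) (Fin n) F) =
      Matrix.reindex (eqv h') (eqv h) (Matrix.fromBlocks
        (B * (g : Matrix (Fin a) (Fin a) F)) (A + B * y)
        (D * (g : Matrix (Fin a) (Fin a) F)) (C + D * y)) := by
  rw [BG_val]
  unfold blk
  rw [Matrix.reindex_apply, Matrix.reindex_apply, Matrix.submatrix_mul_equiv,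
    Matrix.fromBlocks_multiply]
  simp

lemma BG_mul_emb (h : a + b = n) (h' : b + a = n) (g g' : GL (Fin a) F)
    (y : Matrix (Fin a) (Fin b) F) : BG h h' g y * emb h g' = BG h h' (g * g') y := by
  apply Units.ext
  rw [Units.val_mul, emb_val, BG_mul_blk, BG_val]
  simp

/-- upper unipotent block matrices -/
lemma blk_unip (h : a + b = n) {A : Matrix (Fin a) (Fin a) F} (hA : IsUnip F A)
    {D : Matrix (Fin b) (Fin b) F} (hD : IsUnip F D) (B : Matrix (Fin a) (Fin b) F) :
    IsUnip F (blk h A B 0 D) := by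
  refine ⟨fun i => ?_, fun i j hij => ?_⟩
  · obtain ⟨i, rfl⟩ := (eqv h).surjective i
    rw [blk_apply]
    rcases i with i | i
    · simpa using hA.1 i
    · simpa using hD.1 i
  · obtain ⟨i, rfl⟩ := (eqv h).surjective i
    obtain ⟨j, rfl⟩ := (eqv h).surjective j
    rw [blk_apply]
    rcases i with i | i <;> rcases j with j | j
    · simp only [eqv_inl] at hij
      simpa using hA.2 i j hij
    · have := i.2
      simp at hij; omega
    · simp
    · simp only [eqv_inr] at hij
      simpa using hD.2 i j (by omega)

lemma blk_superdiag (h : a + b = n) {A : Matrix (Fin a) (Fin a) F}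
    {D : Matrix (Fin b) (Fin b) F} (B : Matrix (Fin a) (Fin b) F)
    (hB : ∀ (i : Fin a) (j : Fin b), (i : ℕ) + 1 = a → (j : ℕ) = 0 → B i j = 0) :
    superdiag F (blk h A B 0 D) = superdiag F A + superdiag F D := by
  unfold superdiag
  rw [← (eqv h).sum_comp, Fintype.sum_sum_type]
  congr 1
  · refine Finset.sum_congr rfl fun i _ => ?_
    rw [← (eqv h).sum_comp, Fintype.sum_sum_type]
    simp only [blk_apply, eqv_inl, eqv_inr, Matrix.fromBlocks_apply₁₁, Matrix.fromBlocks_apply₁₂]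
    rw [add_eq_left]
    refine Finset.sum_eq_zero fun j _ => ?_
    have := i.2
    split_ifs with hj
    · exact hB i j (by omega) (by omega)
    · rfl
  · refine Finset.sum_congr rfl fun i _ => ?_
    rw [← (eqv h).sum_comp, Fintype.sum_sum_type]
    simp only [blk_apply, eqv_inl, eqv_inr, Matrix.fromBlocks_apply₂₁, Matrix.fromBlocks_apply₂₂]
    simp [add_assoc]

lemma emb_unip (h : a + b = n) {u : GL (Fin a) F} (hu : u ∈ Un F a) : emb h u ∈ Un F n :=
  blk_unip h hu isUnip_one 0

lemma emb_psi (h : a + b = n) (ψ : AddChar F ℂˣ) (u : GL (Fin a) F) :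
    psiN ψ (emb h u) = psiN ψ u := by
  unfold psiN
  rw [emb_val, blk_superdiag h 0 (by simp), superdiag_one, add_zero]

lemma EmbM_emb (h : a + b = n) {p : GL (Fin n) F} (hp : p ∈ EmbM F n a) :
    ∃ g : GL (Fin a) F, p = emb h g := by
  let tl : Matrix (Fin n) (Fin n) F → Matrix (Fin a) (Fin a) F := fun M =>
    M.submatrix (fun i => eqv h (Sum.inl i)) (fun i => eqv h (Sum.inl i))
  have key : ∀ p : GL (Fin n) F, p ∈ EmbM F n a →
      (p : Matrix (Fin n) (Fin n) F) = blk h (tl p) 0 0 1 := by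
    intro p hp
    ext i j
    obtain ⟨i, rfl⟩ := (eqv h).surjective i
    obtain ⟨j, rfl⟩ := (eqv h).surjective j
    rw [blk_apply]
    rcases i with i | i <;> rcases j with j | j
    · simp [tl]
    · rw [hp _ _ (Or.inr (by simp)), ← blk_one h, blk_apply]; simp
    · rw [hp _ _ (Or.inl (by simp)), ← blk_one h, blk_apply]; simp
    · rw [hp _ _ (Or.inl (by simp)), ← blk_one h, blk_apply]; simp
  have inj : ∀ A B : Matrix (Fin a) (Fin a) F, blk h A 0 0 1 = blk h B 0 0 1 → A = B := by
    intro A B hAB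
    ext i j
    have := congrFun (congrFun hAB (eqv h (Sum.inl i))) (eqv h (Sum.inl j))
    rw [blk_apply, blk_apply] at this
    simpa using this
  have k1 := key p hp
  have k2 := key p⁻¹ (EmbM_inv hp)
  refine ⟨⟨tl p, tl (p⁻¹ : GL (Fin n) F), ?_, ?_⟩, Units.ext k1⟩
  · apply inj
    have : (p : Matrix (Fin n) (Fin n) F) * ((p⁻¹ : GL (Fin n) F) : Matrix (Fin n) (Fin n) F) = 1 := by
      rw [← Units.val_mul, mul_inv_cancel, Units.val_one]
    rw [k1, k2, blk_mul, ← blk_one h] at this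
    simpa using this
  · apply inj
    have : ((p⁻¹ : GL (Fin n) F) : Matrix (Fin n) (Fin n) F) * (p : Matrix (Fin n) (Fin n) F) = 1 := by
      rw [← Units.val_mul, inv_mul_cancel, Units.val_one]
    rw [k1, k2, blk_mul, ← blk_one h] at this
    simpa using this

end Elements


section Exchange
variable {n m d : ℕ} {V W : Type*} [AddCommGroup V] [Module ℂ V] [AddCommGroup W] [Module ℂ W]
variable (ψ : AddChar F ℂˣ) (π : Representation ℂ (GL (Fin n) F) V)
  (τ : Representation ℂ (GL (Fin m) F) W)

variable (F m d) in
open scoped Classical in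
/-- matrices supported on the last `k` columns -/
noncomputable def YS (k : ℕ) : Finset (Matrix (Fin m) (Fin d) F) :=
  Finset.univ.filter fun y => ∀ (i : Fin m) (j : Fin d), (j : ℕ) + k < d → y i j = 0

variable (F m d) in
open scoped Classical in
/-- matrices whose last `k+1` rows vanish -/
noncomputable def XS (k : ℕ) : Finset (Matrix (Fin d) (Fin m) F) :=
  Finset.univ.filter fun x => ∀ (i : Fin d) (j : Fin m), d ≤ (i : ℕ) + 1 + k → x i j = 0

lemma mem_YS {k : ℕ} {y : Matrix (Fin m) (Fin d) F} :
    y ∈ YS F m d k ↔ ∀ (i : Fin m) (j : Fin d), (j : ℕ) + k < d → y i j = 0 := by simp [YS]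

lemma mem_XS {k : ℕ} {x : Matrix (Fin d) (Fin m) F} :
    x ∈ XS F m d k ↔ ∀ (i : Fin d) (j : Fin m), d ≤ (i : ℕ) + 1 + k → x i j = 0 := by simp [XS]

lemma exch (h : m + d = n) (h' : d + m = n) {lam : V →ₗ[ℂ] ℂ} (hl : IsWhittaker π (psiN ψ) lam)
    (g : GL (Fin m) F) (x : Matrix (Fin d) (Fin m) F) (y : Matrix (Fin m) (Fin d) F)
    (hyx : y * x = 0)
    (hE : SU (x * ((g⁻¹ : GL (Fin m) F) : Matrix (Fin m) (Fin m) F) * y))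
    (hx : ∀ (i : Fin d) (j : Fin m), (i : ℕ) + 1 = d → x i j = 0) (v : V) :
    lam (π (BG h h' g y) (π (XG h x) v)) =
      ((ψ (-(superdiag F (x * ((g⁻¹ : GL (Fin m) F) : Matrix (Fin m) (Fin m) F) * y))) : ℂˣ) : ℂ) *
        lam (π (BG h h' g y) v) := by
  set E := x * ((g⁻¹ : GL (Fin m) F) : Matrix (Fin m) (Fin m) F) * y with hEdef
  have hSU : SU (-E) := by
    intro i j hij
    rw [Matrix.neg_apply, hE i j hij, neg_zero]
  have hu := blk_unip h' (isUnip_one_add hSU) (isUnip_one (F := F) (n := m))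
    (x * ((g⁻¹ : GL (Fin m) F) : Matrix (Fin m) (Fin m) F))
  have hval := hu.toGL_val
  have e : BG h h' g y * XG h x = toGL (blk h' (1 + -E)
      (x * ((g⁻¹ : GL (Fin m) F) : Matrix (Fin m) (Fin m) F)) 0 1) * BG h h' g y := by
    apply Units.ext
    rw [Units.val_mul, Units.val_mul, hval, XG_val, BG_mul_blk, blk_mul_BG, ← hEdef,
      Matrix.mul_assoc, ← Units.val_mul, inv_mul_cancel, hyx]
    simp
  rw [← Module.End.mul_apply, ← map_mul, e, map_mul, Module.End.mul_apply, hl _ (by rw [hval]; exact hu)]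
  congr 1
  unfold psiN
  rw [hval, blk_superdiag, superdiag_one, superdiag_one_add, add_zero]
  · congr 2
    have := superdiag_add E (-E)
    rw [add_neg_cancel, superdiag_eq_zero (by simp)] at this
    exact (neg_eq_of_add_eq_zero_right this.symm).symm
  · intro i j hi _
    rw [Matrix.mul_apply]
    exact Finset.sum_eq_zero fun l _ => by rw [hx i l hi, zero_mul]

/-- inner exchange -/
lemma exch_sum (hψ : ∃ a : F, ψ a ≠ 1) (h : m + d = n) (h' : d + m = n) (hd : 1 ≤ d)
    {lam : V →ₗ[ℂ] ℂ} (hl : IsWhittaker π (psiN ψ) lam)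
    {k : ℕ} (g : GL (Fin m) F) (y : Matrix (Fin m) (Fin d) F)
    (hy : y ∈ YS F m d (d - 1)) (v : V) [Decidable (y ∈ YS F m d k)] :
    ∑ x ∈ XS F m d k, lam (π (BG h h' g y) (π (XG h x) v)) =
      if y ∈ YS F m d k then ((XS F m d k).card : ℂ) * lam (π (BG h h' g y) v) else 0 := by
  rw [mem_YS] at hy
  split_ifs with hyk
  · rw [mem_YS] at hyk
    rw [← nsmul_eq_mul, ← Finset.sum_const]
    refine Finset.sum_congr rfl fun x hx => ?_
    rw [mem_XS] at hx
    have hEz : ∀ i j : Fin d, (j : ℕ) ≤ i + 1 →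
        (x * ((g⁻¹ : GL (Fin m) F) : Matrix (Fin m) (Fin m) F) * y) i j = 0 := by
      intro i j hij
      rw [Matrix.mul_apply]
      refine Finset.sum_eq_zero fun l _ => ?_
      by_cases hi : d ≤ (i : ℕ) + 1 + k
      · rw [Matrix.mul_apply, Finset.sum_eq_zero, zero_mul]
        intro l' _
        rw [hx i l' hi, zero_mul]
      · rw [hyk l j (by omega), mul_zero]
    rw [exch ψ π h h' hl g x y, superdiag_eq_zero]
    · simp
    · intro i j hij; exact hEz i j (by omega)
    · ext i j
      rw [Matrix.mul_apply]
      refine Finset.sum_eq_zero fun l _ => ?_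
      by_cases hi : d ≤ (l : ℕ) + 1 + k
      · rw [hx l j hi, mul_zero]
      · rw [hyk i l (by omega), zero_mul]
    · intro i j hij; exact hEz i j (by omega)
    · intro i j hi; exact hx i j (by omega)
  · rw [mem_YS] at hyk
    push Not at hyk
    -- first nonzero column
    have hex : ∃ c : ℕ, ∃ (i : Fin m) (j : Fin d), (j : ℕ) = c ∧ c + k < d ∧ y i j ≠ 0 := by
      obtain ⟨i, j, hj, hne⟩ := hyk
      exact ⟨j, i, j, rfl, hj, hne⟩
    classical
    obtain ⟨i0, c, hc, hck, hne⟩ := Nat.find_spec hex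
    have hmin : ∀ (i : Fin m) (j : Fin d), (j : ℕ) < c → y i j = 0 := by
      intro i j hj
      by_contra hcon
      exact Nat.find_min hex (by omega) ⟨i, j, rfl, by omega, hcon⟩
    rw [← hc] at hck
    have hc1 : 1 ≤ (c : ℕ) := by
      by_contra hcon
      exact hne (hy i0 c (by omega))
    let r : Fin d := ⟨c - 1, by have := c.2; omega⟩
    have hrv : (r : ℕ) = c - 1 := rfl
    obtain ⟨a0, ha0⟩ := hψ
    -- the row vector
    let row : Fin m → F := Pi.single i0 (-a0 / y i0 c) ᵥ* (g : Matrix (Fin m) (Fin m) F)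
    let x0 : Matrix (Fin d) (Fin m) F := fun i j => if i = r then row j else 0
    have hx0r : ∀ i j, i ≠ r → x0 i j = 0 := by
      intro i j hi; simp [x0, hi]
    have hx0mem : x0 ∈ XS F m d k := by
      rw [mem_XS]
      intro i j hi
      apply hx0r
      rintro rfl
      omega
    have hE : ∀ i j, (x0 * ((g⁻¹ : GL (Fin m) F) : Matrix (Fin m) (Fin m) F) * y) i j =
        if i = r then -a0 / y i0 c * y i0 j else 0 := by
      intro i j
      split_ifs with hi
      · subst hi
        have : (x0 * ((g⁻¹ : GL (Fin m) F) : Matrix (Fin m) (Fin m) F) * y) r j =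
            ((row ᵥ* ((g⁻¹ : GL (Fin m) F) : Matrix (Fin m) (Fin m) F)) ᵥ* y) j := by
          rw [Matrix.vecMul_vecMul, Matrix.mul_assoc, Matrix.mul_apply]
          simp [x0, Matrix.vecMul, dotProduct]
        rw [this]
        simp only [row]
        rw [Matrix.vecMul_vecMul (Pi.single i0 _), ← Units.val_mul, mul_inv_cancel, Units.val_one,
          Matrix.vecMul_one]
        simp [Matrix.vecMul, single_dotProduct]
      · rw [Matrix.mul_assoc, Matrix.mul_apply]
        exact Finset.sum_eq_zero fun l _ => by rw [hx0r i l hi, zero_mul]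
    have hex0 : ∀ v', lam (π (BG h h' g y) (π (XG h x0) v')) =
        ((ψ a0 : ℂˣ) : ℂ) * lam (π (BG h h' g y) v') := by
      intro v'
      rw [exch ψ π h h' hl g x0 y]
      · congr 3
        rw [superdiag_single r c (by omega)]
        · rw [hE, if_pos rfl]; field_simp
        · intro i j _ hi
          rw [hE, if_neg hi]
      · ext i j
        rw [Matrix.mul_apply]
        refine Finset.sum_eq_zero fun l _ => ?_
        by_cases hl : l = r
        · rw [hl, hmin i r (by omega), zero_mul]
        · rw [hx0r l j hl, mul_zero]
      · intro i j hij
        rw [hE]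
        split_ifs with hi
        · subst hi
          rw [hmin i0 j (by omega), mul_zero]
        · rfl
      · intro i j hi
        exact mem_XS.1 hx0mem i j (by omega)
    set Sm := ∑ x ∈ XS F m d k, lam (π (BG h h' g y) (π (XG h x) v)) with hSm
    have h1 : Sm = ((ψ a0 : ℂˣ) : ℂ) * Sm := by
      rw [hSm, Finset.mul_sum]
      symm
      refine Finset.sum_equiv (Equiv.addLeft x0) ?_ ?_
      · intro x
        rw [mem_XS] at hx0mem
        rw [mem_XS, mem_XS, Equiv.coe_addLeft]
        refine forall_congr' fun i => forall_congr' fun j => forall_congr' fun hi => ?_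
        show _ ↔ (x0 + x) i j = 0
        rw [Matrix.add_apply, hx0mem i j hi, zero_add]
      · intro x _
        rw [Equiv.coe_addLeft, XG_add, map_mul, Module.End.mul_apply, hex0]
    have h2 : (((ψ a0 : ℂˣ) : ℂ) - 1) * Sm = 0 := by
      rw [sub_mul, ← h1, one_mul, sub_self]
    refine (mul_eq_zero.1 h2).resolve_left ?_
    intro hh
    exact ha0 (Units.ext (sub_eq_zero.1 hh))

/-- right-hand side zeta sum -/
noncomputable def RZ (h : m + d = n) (h' : d + m = n) (k : ℕ) (lam : V →ₗ[ℂ] ℂ) (mu : W →ₗ[ℂ] ℂ)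
    (v : V) (w : W) : ℂ :=
  ∑ g : GL (Fin m) F, ∑ y ∈ YS F m d k, lam (π (BG h h' g y) v) * mu (τ g w)

lemma RZ_exch (hψ : ∃ a : F, ψ a ≠ 1) (h : m + d = n) (h' : d + m = n) (hd : 1 ≤ d)
    {lam : V →ₗ[ℂ] ℂ} (hl : IsWhittaker π (psiN ψ) lam) (mu : W →ₗ[ℂ] ℂ)
    {k : ℕ} (hk : k ≤ d - 1) (v : V) (w : W) :
    ∑ x ∈ XS F m d k, RZ π τ h h' (d - 1) lam mu (π (XG h x) v) w =
      ((XS F m d k).card : ℂ) * RZ π τ h h' k lam mu v w := by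
  classical
  unfold RZ
  rw [Finset.sum_comm, Finset.mul_sum]
  refine Finset.sum_congr rfl fun g _ => ?_
  rw [Finset.sum_comm, Finset.mul_sum]
  have hsub : YS F m d k = (YS F m d (d - 1)).filter (· ∈ YS F m d k) := by
    ext y
    rw [Finset.mem_filter]
    refine ⟨fun hy => ⟨?_, hy⟩, fun hy => hy.2⟩
    rw [mem_YS] at hy ⊢
    intro i j hj
    exact hy i j (by omega)
  rw [hsub, Finset.sum_filter]
  refine Finset.sum_congr rfl fun y hy => ?_
  rw [← Finset.sum_mul, exch_sum ψ π hψ h h' hd hl g y hy]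
  split_ifs <;> ring

lemma RZ_inv (h : m + d = n) (h' : d + m = n) (k : ℕ) (lam : V →ₗ[ℂ] ℂ) (mu : W →ₗ[ℂ] ℂ)
    (a : GL (Fin m) F) (v : V) (w : W) :
    RZ π τ h h' k lam mu (π (emb h a) v) (τ a w) = RZ π τ h h' k lam mu v w := by
  unfold RZ
  refine Fintype.sum_equiv (Equiv.mulRight a) _ _ fun g => ?_
  refine Finset.sum_congr rfl fun y _ => ?_
  rw [Equiv.coe_mulRight, ← Module.End.mul_apply, ← map_mul, BG_mul_emb, ← Module.End.mul_apply,
    ← map_mul]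

lemma RZ_eqT (h : m + d = n) (h' : d + m = n) (hd : 1 ≤ d) {lam : V →ₗ[ℂ] ℂ}
    (hl : IsWhittaker π (psiN ψ) lam) (mu : W →ₗ[ℂ] ℂ) {s : GL (Fin n) F} (hs : InT (m + 1) s)
    (v : V) (w : W) :
    RZ π τ h h' (d - 1) lam mu (π s v) w = psiN ψ s * RZ π τ h h' (d - 1) lam mu v w := by
  let y1 : Matrix (Fin m) (Fin d) F := (s : Matrix (Fin n) (Fin n) F).submatrix
    (fun i => eqv h (Sum.inl i)) (fun i => eqv h (Sum.inr i))
  let u : Matrix (Fin d) (Fin d) F := (s : Matrix (Fin n) (Fin n) F).submatrix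
    (fun i => eqv h (Sum.inr i)) (fun i => eqv h (Sum.inr i))
  have hsval : (s : Matrix (Fin n) (Fin n) F) = blk h 1 y1 0 u := by
    ext i j
    obtain ⟨i, rfl⟩ := (eqv h).surjective i
    obtain ⟨j, rfl⟩ := (eqv h).surjective j
    rw [blk_apply]
    rcases j with j | j
    · have := j.2
      rw [hs.2 _ _ (by rw [eqv_inl]; omega), ← blk_one h, blk_apply]
      rcases i with i | i <;> simp
    · rcases i with i | i <;> simp [y1, u]
  have hu : IsUnip F u := by
    refine ⟨fun i => hs.1.1 _, fun i j hij => hs.1.2 _ _ ?_⟩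
    simp; omega
  have hy1 : ∀ (i : Fin m) (j : Fin d), (j : ℕ) = 0 → y1 i j = 0 := by
    intro i j hj
    have := hs.2 (eqv h (Sum.inl i)) (eqv h (Sum.inr j)) (by simp; omega)
    simp only [y1, Matrix.submatrix_apply]
    rw [this, ← blk_one h, blk_apply]; simp
  have huval := hu.toGL_val
  have hmul : ∀ (g : GL (Fin m) F) (y : Matrix (Fin m) (Fin d) F), BG h h' g y * s =
      emb h' (toGL u) * BG h h' g ((g : Matrix (Fin m) (Fin m) F) * y1 + y * u) := by
    intro g y
    apply Units.ext
    rw [Units.val_mul, Units.val_mul, hsval, emb_val, huval, BG_mul_blk, blk_mul_BG]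
    simp
  have hpsi : psiN ψ s = psiN ψ (emb h' (toGL u) : GL (Fin n) F) := by
    rw [emb_psi]
    unfold psiN
    rw [hsval, huval, blk_superdiag h y1 (fun i j _ hj => hy1 i j hj), superdiag_one, zero_add]
  have hmem : emb h' (toGL u) ∈ Un F n := emb_unip h' (by rw [mem_Un, huval]; exact hu)
  unfold RZ
  rw [Finset.mul_sum]
  refine Finset.sum_congr rfl fun g _ => ?_
  rw [Finset.mul_sum]
  have hmaps : Set.MapsTo (fun y => (g : Matrix (Fin m) (Fin m) F) * y1 + y * u)
      (YS F m d (d - 1) : Set (Matrix (Fin m) (Fin d) F)) (YS F m d (d - 1)) := by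
    intro y hy
    rw [Finset.mem_coe, mem_YS] at hy ⊢
    intro i j hj
    show ((g : Matrix (Fin m) (Fin m) F) * y1 + y * u) i j = 0
    rw [Matrix.add_apply, Matrix.mul_apply, Matrix.mul_apply, Finset.sum_eq_zero,
      Finset.sum_eq_zero, zero_add]
    · intro l _
      by_cases hlj : (j : ℕ) < l
      · rw [hu.2 l j hlj, mul_zero]
      · rw [hy i l (by omega), zero_mul]
    · intro l _
      rw [hy1 l j (by omega), mul_zero]
  have hinj : Set.InjOn (fun y => (g : Matrix (Fin m) (Fin m) F) * y1 + y * u)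
      (YS F m d (d - 1) : Set (Matrix (Fin m) (Fin d) F)) := by
    intro y _ y' _ hyy
    have h1 : y * u = y' * u := add_left_cancel hyy
    have h2 : u * u⁻¹ = 1 := Matrix.mul_nonsing_inv u (by rw [hu.det]; exact isUnit_one)
    calc y = y * u * u⁻¹ := by rw [Matrix.mul_assoc, h2, Matrix.mul_one]
      _ = y' := by rw [h1, Matrix.mul_assoc, h2, Matrix.mul_one]
  refine Finset.sum_nbij (fun y => (g : Matrix (Fin m) (Fin m) F) * y1 + y * u) hmaps hinj
    (Finset.surjOn_of_injOn_of_card_le _ hmaps hinj le_rfl) ?_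
  intro y _
  rw [← Module.End.mul_apply, ← map_mul, hmul, map_mul, Module.End.mul_apply, hl _ hmem, hpsi,
    mul_assoc]

end Exchange


section FunctionalEquation
variable {n m d : ℕ} {V W : Type*} [AddCommGroup V] [Module ℂ V] [AddCommGroup W] [Module ℂ W]
variable (ψ : AddChar F ℂˣ) (π : Representation ℂ (GL (Fin n) F) V)
  (τ : Representation ℂ (GL (Fin m) F) W)

/-- left-hand side zeta sum -/
noncomputable def LZ (h : m + d = n) (lam : V →ₗ[ℂ] ℂ) (mu : W →ₗ[ℂ] ℂ) (v : V) (w : W) : ℂ :=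
  ∑ g : GL (Fin m) F, lam (π (emb h g) v) * mu (τ g w)

/-- the sum as a bilinear map -/
noncomputable def RB (h : m + d = n) (h' : d + m = n) (k : ℕ) (lam : V →ₗ[ℂ] ℂ)
    (mu : W →ₗ[ℂ] ℂ) : W →ₗ[ℂ] (V →ₗ[ℂ] ℂ) :=
  ∑ g : GL (Fin m) F, ∑ y ∈ YS F m d k,
    LinearMap.smulRight (mu ∘ₗ τ g) (lam ∘ₗ π (BG h h' g y))

lemma RB_apply (h : m + d = n) (h' : d + m = n) (k : ℕ) (lam : V →ₗ[ℂ] ℂ)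
    (mu : W →ₗ[ℂ] ℂ) (v : V) (w : W) : RB π τ h h' k lam mu w v = RZ π τ h h' k lam mu v w := by
  unfold RB RZ
  simp only [LinearMap.sum_apply, LinearMap.smulRight_apply, LinearMap.smul_apply,
    LinearMap.comp_apply, smul_eq_mul]
  exact Finset.sum_congr rfl fun g _ => Finset.sum_congr rfl fun y _ => mul_comm _ _

/-- coefficient map -/
noncomputable def Phi (h : m + d = n) (lam : V →ₗ[ℂ] ℂ) :
    (GL (Fin m) F → ℂ) →ₗ[ℂ] (V →ₗ[ℂ] ℂ) :=
  ∑ g : GL (Fin m) F, LinearMap.smulRight (LinearMap.proj g) (lam ∘ₗ π (emb h g))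

lemma Phi_apply (h : m + d = n) (lam : V →ₗ[ℂ] ℂ) (c : GL (Fin m) F → ℂ) (v : V) :
    Phi π h lam c v = ∑ g, c g * lam (π (emb h g) v) := by
  unfold Phi
  simp [LinearMap.sum_apply]

lemma mem_range_Phi (h : m + d = n) (lam : V →ₗ[ℂ] ℂ) (g : GL (Fin m) F) :
    lam ∘ₗ π (emb h g) ∈ LinearMap.range (Phi π h lam) := by
  classical
  refine ⟨Pi.single g 1, ?_⟩
  ext v
  rw [Phi_apply, Finset.sum_eq_single g]
  · simp
  · intro b _ hb
    simp [Pi.single_eq_of_ne hb]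
  · simp

theorem exists_c [FiniteDimensional ℂ V] [FiniteDimensional ℂ W] (hψ : ∃ a : F, ψ a ≠ 1)
    (hc : IsCuspidal π) (hπ : IsIrreducible π) (hτ : IsIrreducible τ)
    (h : m + d = n) (h' : d + m = n) (hd : 1 ≤ d) {lam : V →ₗ[ℂ] ℂ} {mu : W →ₗ[ℂ] ℂ}
    (hl : IsWhittaker π (psiN ψ) lam) (hmu : IsWhittaker τ (psiN ψ⁻¹) mu)
    (hl0 : lam ≠ 0) (hmu0 : mu ≠ 0) :
    ∃ c : ℂ, ∀ v w, RZ π τ h h' (d - 1) lam mu v w = c * LZ π τ h lam mu v w := by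
  have hψ' : ∃ a : F, ψ⁻¹ a ≠ 1 := by
    obtain ⟨a, ha⟩ := hψ
    refine ⟨a, ?_⟩
    rw [AddChar.inv_apply']
    simpa using ha
  set R := RB π τ h h' (d - 1) lam mu with hR
  have hrange : ∀ w, R w ∈ LinearMap.range (Phi π h lam) := by
    intro w
    have h1 : EqT ψ π (m + 1) (R w) := by
      intro u hu v
      rw [hR, RB_apply, RB_apply, RZ_eqT ψ π τ h h' hd hl mu hu]
    have h2 := spanning ψ π hψ hc m (by omega) (R w) h1
    refine Submodule.span_le.2 ?_ h2
    rintro _ ⟨lam', hlam', p, hp, rfl⟩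
    obtain ⟨c, rfl⟩ := mult_one ψ π hψ hπ hl hlam' hl0
    obtain ⟨g, rfl⟩ := EmbM_emb h hp
    rw [LinearMap.smul_comp]
    exact Submodule.smul_mem _ c (mem_range_Phi π h lam g)
  obtain ⟨sec, hsec⟩ := (Phi π h lam).rangeRestrict.exists_rightInverse_of_surjective
    (LinearMap.range_rangeRestrict _)
  set s : W →ₗ[ℂ] (GL (Fin m) F → ℂ) := sec ∘ₗ R.codRestrict _ hrange with hs
  have hsR : ∀ w v, R w v = ∑ g, s w g * lam (π (emb h g) v) := by
    intro w v
    rw [← Phi_apply]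
    have := LinearMap.congr_fun hsec (R.codRestrict _ hrange w)
    have h3 := congrArg Subtype.val this
    exact (LinearMap.congr_fun h3 v).symm
  set N : ℂ := (Fintype.card (GL (Fin m) F) : ℂ) with hN
  have hN0 : N ≠ 0 := Nat.cast_ne_zero.2 Fintype.card_ne_zero
  -- averaged functional
  set mu1 : W →ₗ[ℂ] ℂ := ∑ g : GL (Fin m) F, LinearMap.proj g ∘ₗ s ∘ₗ τ g⁻¹ with hmu1
  have hmu1a : ∀ w, mu1 w = ∑ g, s (τ g⁻¹ w) g := by
    intro w; rw [hmu1, LinearMap.sum_apply]; rfl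
  have hR1 : ∀ v w, N * R w v = ∑ g, lam (π (emb h g) v) * mu1 (τ g w) := by
    intro v w
    have e1 : N * R w v = ∑ a : GL (Fin m) F, R (τ a w) (π (emb h a) v) := by
      have : ∀ a : GL (Fin m) F, R (τ a w) (π (emb h a) v) = R w v := by
        intro a
        rw [hR, RB_apply, RB_apply, RZ_inv]
      simp_rw [this]
      rw [Finset.sum_const, nsmul_eq_mul, Finset.card_univ]
    rw [e1]
    simp_rw [hsR, hmu1a, Finset.mul_sum]
    rw [Finset.sum_comm]
    conv_rhs => rw [Finset.sum_comm]
    refine Finset.sum_congr rfl fun g _ => ?_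
    refine Fintype.sum_equiv (Equiv.mulLeft g) _ _ fun a => ?_
    simp only [Equiv.coe_mulLeft, map_mul, Module.End.mul_apply]
    rw [← Module.End.mul_apply (τ g⁻¹), ← map_mul, inv_mul_cancel, map_one, Module.End.one_apply,
      mul_comm]
  -- make it Whittaker
  have hR2 : ∀ v w, N * R w v = ∑ g, lam (π (emb h g) v) * mu1 (eOp ψ⁻¹ τ (τ g w)) := by
    intro v w
    have e2 : ∀ u : Un F m, N * R w v =
        ∑ g, lam (π (emb h g) v) * (psiN ψ (u : GL (Fin m) F) * mu1 (τ u (τ g w))) := by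
      intro u
      rw [hR1]
      symm
      refine Fintype.sum_equiv (Equiv.mulLeft (u : GL (Fin m) F)) _ _ fun g => ?_
      simp only [Equiv.coe_mulLeft, map_mul, Module.End.mul_apply]
      rw [hl _ (emb_unip h u.2), emb_psi]
      ring
    have e3 : ∀ w', mu1 (eOp ψ⁻¹ τ w') = (Fintype.card (Un F m) : ℂ)⁻¹ *
        ∑ u : Un F m, psiN ψ (u : GL (Fin m) F) * mu1 (τ u w') := by
      intro w'
      unfold eOp
      simp only [LinearMap.smul_apply, LinearMap.sum_apply, map_smul, map_sum, smul_eq_mul,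
        psiN_invchar, inv_inv]
    have e4 : (Fintype.card (Un F m) : ℂ) * (N * R w v) =
        (Fintype.card (Un F m) : ℂ) * ∑ g, lam (π (emb h g) v) * mu1 (eOp ψ⁻¹ τ (τ g w)) := by
      calc (Fintype.card (Un F m) : ℂ) * (N * R w v) = ∑ u : Un F m, N * R w v := by
            rw [Finset.sum_const, nsmul_eq_mul, Finset.card_univ]
        _ = ∑ u : Un F m, ∑ g, lam (π (emb h g) v) *
              (psiN ψ (u : GL (Fin m) F) * mu1 (τ u (τ g w))) :=
            Finset.sum_congr rfl fun u _ => e2 u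
        _ = _ := by
            rw [Finset.sum_comm, Finset.mul_sum]
            refine Finset.sum_congr rfl fun g _ => ?_
            rw [e3, ← Finset.mul_sum]
            have := cardUn_ne (F := F) (n := m)
            field_simp
    exact mul_left_cancel₀ cardUn_ne e4
  have hW : IsWhittaker τ (psiN ψ⁻¹) (mu1 ∘ₗ eOp ψ⁻¹ τ) := by
    intro u hu w
    have := LinearMap.congr_fun (eOp_mul ψ⁻¹ τ (u := u) hu) w
    rw [Module.End.mul_apply] at this
    rw [LinearMap.comp_apply, this, LinearMap.smul_apply, map_smul, smul_eq_mul]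
    rfl
  obtain ⟨c, hcc⟩ := mult_one ψ⁻¹ τ hψ' hτ hmu hW hmu0
  refine ⟨N⁻¹ * c, fun v w => ?_⟩
  have h5 := hR2 v w
  have h6 : ∀ w', mu1 (eOp ψ⁻¹ τ w') = c * mu w' := fun w' => LinearMap.congr_fun hcc w'
  simp_rw [h6] at h5
  rw [← RB_apply, ← hR, mul_assoc, eq_inv_mul_iff_mul_eq₀ hN0, h5, LZ, Finset.mul_sum]
  exact Finset.sum_congr rfl fun g _ => by ring

end FunctionalEquation

section Matrices
variable {n m k : ℕ}

/-- extension of `x` -/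
def extX (k : ℕ) (x : Matrix (Fin (n - m - 1 - k)) (Fin m) F) : Matrix (Fin (n - m)) (Fin m) F :=
  fun i j => if h : (i : ℕ) < n - m - 1 - k then x ⟨i, h⟩ j else 0

/-- extension of `y` -/
def extY (hk : k ≤ n - m - 1) (y : Matrix (Fin m) (Fin k) F) : Matrix (Fin m) (Fin (n - m)) F :=
  fun i j => if h : n - m - k ≤ (j : ℕ) then y i ⟨j - (n - m - k), by have := j.2; omega⟩ else 0

lemma toGL_Amat (hm : m < n) (hk : k ≤ n - m - 1) (h : m + (n - m) = n) (g : GL (Fin m) F)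
    (x : Matrix (Fin (n - m - 1 - k)) (Fin m) F) :
    toGL (Amat hm hk (g : Matrix (Fin m) (Fin m) F) x) = emb h g * XG h (extX k x) := by
  apply toGL_eq
  rw [Units.val_mul, emb_val, XG_val, blk_mul]
  ext i j
  obtain ⟨i, rfl⟩ := (eqv h).surjective i
  obtain ⟨j, rfl⟩ := (eqv h).surjective j
  rw [blk_apply]
  rcases i with i | i <;> rcases j with j | j
  · simp [Amat]
  · simp [Amat]
  · simp only [Amat, eqv_inl, eqv_inr, Matrix.fromBlocks_apply₂₁, extX]
    by_cases hi : (i : ℕ) < n - m - 1 - k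
    · have : m + (i : ℕ) < n - k - 1 := by omega
      simp [hi, this, extX]
    · have : ¬ m + (i : ℕ) < n - k - 1 := by omega
      simp [hi, this, extX]
  · simp [Amat, Matrix.one_apply, Fin.ext_iff]

lemma toGL_Bmat (hm : m < n) (hk : k ≤ n - m - 1) (h : m + (n - m) = n) (h' : n - m + m = n)
    (g : GL (Fin m) F) (y : Matrix (Fin m) (Fin k) F) :
    toGL (Bmat hm hk (g : Matrix (Fin m) (Fin m) F) y) = BG h h' g (extY hk y) := by
  apply toGL_eq
  rw [BG_val]
  ext i j
  obtain ⟨i, rfl⟩ := (eqv h').surjective i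
  obtain ⟨j, rfl⟩ := (eqv h).surjective j
  rw [Matrix.reindex_apply, Matrix.submatrix_apply, Equiv.symm_apply_apply,
    Equiv.symm_apply_apply]
  rcases i with i | i <;> rcases j with j | j
  · have := i.2
    have := j.2
    simp only [Bmat, eqv_inl, Matrix.fromBlocks_apply₁₁]
    rw [dif_pos (by omega), if_neg (by omega)]; rfl
  · simp only [Bmat, eqv_inl, eqv_inr, Matrix.fromBlocks_apply₁₂]
    rw [dif_pos i.2, Matrix.one_apply]
    congr 1
    rw [Fin.ext_iff, eq_iff_iff]; omega
  · simp [Bmat]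
  · simp only [Bmat, eqv_inr, Matrix.fromBlocks_apply₂₂, extY]
    have hj := j.2
    have h1 : ¬ (n - m + (i : ℕ) < n - m) := by omega
    have h2 : ¬ (m + (j : ℕ) < m) := by omega
    by_cases hjk : n - m - k ≤ (j : ℕ)
    · have h3 : n - k ≤ m + (j : ℕ) := by omega
      simp only [h1, h2, hjk, h3, dif_pos, dif_neg, not_false_iff]
      congr 1 <;> rw [Fin.ext_iff] <;> simp <;> omega
    · have h3 : ¬ (n - k ≤ m + (j : ℕ)) := by omega
      simp only [h1, h2, hjk, h3, dif_neg, not_false_iff]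

lemma sum_extX (hk : k ≤ n - m - 1) {M : Type*} [AddCommMonoid M]
    (f : Matrix (Fin (n - m)) (Fin m) F → M) :
    ∑ x : Matrix (Fin (n - m - 1 - k)) (Fin m) F, f (extX k x) = ∑ x ∈ XS F m (n - m) k, f x := by
  refine Finset.sum_nbij' (extX k) (fun x => x.submatrix (Fin.castLE (by omega)) id) ?_ ?_ ?_ ?_ ?_
  · intro x _
    rw [mem_XS]
    intro i j hi
    unfold extX
    rw [dif_neg (by omega)]
  · intro x _; exact Finset.mem_univ _
  · intro x _
    ext i j
    simp [extX]
  · intro x hx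
    rw [mem_XS] at hx
    ext i j
    unfold extX
    split_ifs with hi
    · rfl
    · exact (hx i j (by omega)).symm
  · intro x _; rfl

lemma sum_extY (hm : m < n) (hk : k ≤ n - m - 1) {M : Type*} [AddCommMonoid M]
    (f : Matrix (Fin m) (Fin (n - m)) F → M) :
    ∑ y : Matrix (Fin m) (Fin k) F, f (extY hk y) = ∑ y ∈ YS F m (n - m) k, f y := by
  refine Finset.sum_nbij' (extY hk) (fun y => y.submatrix id
    (fun j : Fin k => ⟨j + (n - m - k), by have := j.2; omega⟩)) ?_ ?_ ?_ ?_ ?_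
  · intro x _
    rw [mem_YS]
    intro i j hi
    unfold extY
    rw [dif_neg (by omega)]
  · intro x _; exact Finset.mem_univ _
  · intro x _
    ext i j
    simp [extY]
  · intro x hx
    rw [mem_YS] at hx
    ext i j
    unfold extY
    split_ifs with hi
    · rw [Matrix.submatrix_apply]
      congr 1
      rw [Fin.ext_iff]
      show (j : ℕ) - (n - m - k) + (n - m - k) = j
      omega
    · exact (hx i j (by omega)).symm
  · intro x _; rfl

lemma card_XS (hk : k ≤ n - m - 1) :
    (XS F m (n - m) k).card = Fintype.card F ^ ((n - m - 1 - k) * m) := by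
  rw [Finset.card_eq_sum_ones, ← sum_extX hk (fun _ => 1)]
  rw [← Finset.card_eq_sum_ones, Finset.card_univ, Fintype.card_congr Matrix.of.symm]
  simp [pow_mul, pow_right_comm]

end Matrices

theorem existence_of_gamma
    (q : ℕ) (hq : Fintype.card F = q)
    (ψ : AddChar F ℂˣ) (hψ : ∃ a : F, ψ a ≠ 1)
    (n m : ℕ) (hm1 : 1 ≤ m) (hnm : m < n)
    {V W : Type*} [AddCommGroup V] [Module ℂ V] [FiniteDimensional ℂ V] [Nontrivial V]
    [AddCommGroup W] [Module ℂ W] [FiniteDimensional ℂ W] [Nontrivial W]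
    (π : Representation ℂ (GL (Fin n) F) V)
    (τ : Representation ℂ (GL (Fin m) F) W)
    (hπirr : IsIrreducible π) (hπcusp : IsCuspidal π)
    (hτirr : IsIrreducible τ)
    (hτgen : ∃ mu : W →ₗ[ℂ] ℂ, mu ≠ 0 ∧ IsWhittaker τ (psiN ψ) mu) :
    ∃ γ : ℂ, ∀ (k : ℕ) (hk : k ≤ n - m - 1)
      (lam : V →ₗ[ℂ] ℂ), IsWhittaker π (psiN ψ) lam →
      ∀ v : V, ∀ mu : W →ₗ[ℂ] ℂ, IsWhittaker τ (fun u => (psiN ψ u)⁻¹) mu → ∀ w : W,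
      γ * (q : ℂ) ^ (k * m) * ((UnipFinset F m).card : ℂ)⁻¹ *
          ∑ g : GL (Fin m) F, ∑ x : Matrix (Fin (n - m - 1 - k)) (Fin m) F,
            lam (π (toGL (Amat hnm hk (Units.val g) x)) v) * mu (τ g w)
        = ((UnipFinset F m).card : ℂ)⁻¹ *
          ∑ g : GL (Fin m) F, ∑ y : Matrix (Fin m) (Fin k) F,
            lam (π (toGL (Bmat hnm hk (Units.val g) y)) v) * mu (τ g w) := by
  subst hq
  have hconv : ∀ mu : W →ₗ[ℂ] ℂ, IsWhittaker τ (fun u => (psiN ψ u)⁻¹) mu →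
      IsWhittaker τ (psiN ψ⁻¹) mu := by
    intro mu hmu u hu w
    rw [hmu u hu w, psiN_invchar]
  have hψ' : ∃ a : F, ψ⁻¹ a ≠ 1 := by
    obtain ⟨a, ha⟩ := hψ
    refine ⟨a, ?_⟩
    rw [AddChar.inv_apply']
    simpa using ha
  have h : m + (n - m) = n := by omega
  have h' : n - m + m = n := by omega
  by_cases hex : ∃ (lam0 : V →ₗ[ℂ] ℂ) (mu0 : W →ₗ[ℂ] ℂ), IsWhittaker π (psiN ψ) lam0 ∧
      IsWhittaker τ (psiN ψ⁻¹) mu0 ∧ lam0 ≠ 0 ∧ mu0 ≠ 0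
  · obtain ⟨lam0, mu0, hl0, hm0, hl00, hm00⟩ := hex
    obtain ⟨c, hc⟩ := exists_c ψ π τ hψ hπcusp hπirr hτirr h h' (by omega) hl0 hm0 hl00 hm00
    have hq0 : (Fintype.card F : ℂ) ≠ 0 := Nat.cast_ne_zero.2 Fintype.card_ne_zero
    refine ⟨c * ((Fintype.card F : ℂ) ^ ((n - m - 1) * m))⁻¹, ?_⟩
    intro k hk lam hlam v mu hmu w
    obtain ⟨a, rfl⟩ := mult_one ψ π hψ hπirr hl0 hlam hl00
    obtain ⟨b, rfl⟩ := mult_one ψ⁻¹ τ hψ' hτirr hm0 (hconv mu hmu) hm00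
    have hA : ∑ g : GL (Fin m) F, ∑ x : Matrix (Fin (n - m - 1 - k)) (Fin m) F,
        (a • lam0) (π (toGL (Amat hnm hk (Units.val g) x)) v) * (b • mu0) (τ g w) =
        a * b * ∑ x ∈ XS F m (n - m) k, LZ π τ h lam0 mu0 (π (XG h x) v) w := by
      unfold LZ
      rw [Finset.sum_comm, ← sum_extX hk, Finset.mul_sum]
      refine Finset.sum_congr rfl fun x _ => ?_
      rw [Finset.mul_sum]
      refine Finset.sum_congr rfl fun g _ => ?_
      rw [toGL_Amat hnm hk h, map_mul, Module.End.mul_apply, LinearMap.smul_apply,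
        LinearMap.smul_apply, smul_eq_mul, smul_eq_mul]
      ring
    have hB : ∑ g : GL (Fin m) F, ∑ y : Matrix (Fin m) (Fin k) F,
        (a • lam0) (π (toGL (Bmat hnm hk (Units.val g) y)) v) * (b • mu0) (τ g w) =
        a * b * RZ π τ h h' k lam0 mu0 v w := by
      unfold RZ
      rw [Finset.mul_sum]
      refine Finset.sum_congr rfl fun g _ => ?_
      rw [← sum_extY hnm hk, Finset.mul_sum]
      refine Finset.sum_congr rfl fun y _ => ?_
      rw [toGL_Bmat hnm hk h h', LinearMap.smul_apply, LinearMap.smul_apply, smul_eq_mul,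
        smul_eq_mul]
      ring
    have hE := RZ_exch ψ π τ hψ h h' (by omega) hl0 mu0 hk v w
    simp_rw [hc] at hE
    rw [← Finset.mul_sum, card_XS hk, Nat.cast_pow] at hE
    rw [hA, hB]
    have hpow : (Fintype.card F : ℂ) ^ ((n - m - 1) * m) =
        (Fintype.card F : ℂ) ^ ((n - m - 1 - k) * m) * (Fintype.card F : ℂ) ^ (k * m) := by
      rw [← pow_add, ← add_mul]
      congr 2
      omega
    have hp1 : (Fintype.card F : ℂ) ^ ((n - m - 1 - k) * m) ≠ 0 := pow_ne_zero _ hq0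
    have hp2 : (Fintype.card F : ℂ) ^ (k * m) ≠ 0 := pow_ne_zero _ hq0
    have hR : RZ π τ h h' k lam0 mu0 v w = ((Fintype.card F : ℂ) ^ ((n - m - 1 - k) * m))⁻¹ *
        (c * ∑ x ∈ XS F m (n - m) k, LZ π τ h lam0 mu0 (π (XG h x) v) w) := by
      rw [hE, inv_mul_cancel_left₀ hp1]
    have hg : c * ((Fintype.card F : ℂ) ^ ((n - m - 1) * m))⁻¹ * (Fintype.card F : ℂ) ^ (k * m) =
        c * ((Fintype.card F : ℂ) ^ ((n - m - 1 - k) * m))⁻¹ := by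
      rw [hpow, mul_inv, mul_assoc, mul_assoc, inv_mul_cancel₀ hp2, mul_one]
    rw [hR, hg]
    ring
  · refine ⟨0, ?_⟩
    intro k hk lam hlam v mu hmu w
    have h0 : lam = 0 ∨ mu = 0 := by
      by_contra hcon
      push Not at hcon
      exact hex ⟨lam, mu, hlam, hconv mu hmu, hcon.1, hcon.2⟩
    rcases h0 with rfl | rfl <;> simp


end Stmt0
end

section
/- Let F be a finite field with q elements, ψ : F → ℂˣ a nontrivial additive character, and (π, V) an irreducible generic finite-dimensional complex representation of GL_n(F) with trace character χ_π. Define J_{π,ψ_n}(g) = |U_n(F)|^{-1} Σ_{u ∈ U_n(F)} χ_π(gu) ψ_n(u)^{-1} for g ∈ GL_n(F). Then: (1) J_{π,ψ_n}(u₁ g u₂) = ψ_n(u₁)ψ_n(u₂) J_{π,ψ_n}(g) for all u₁, u₂ ∈ U_n(F) and g ∈ GL_n(F); (2) J_{π,ψ_n}(I_n) = 1; and (3) J_{π,ψ_n} lies in the Whittaker model of π, i.e. there exist a nonzero ψ_n-Whittaker functional λ on π and a vector v ∈ V such that J_{π,ψ_n}(g) = λ(π(g)v) for all g ∈ GL_n(F).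 -/
/-!
Statement 1: properties of the normalized Bessel function of an irreducible generic
representation of `GL_n(F)` over a finite field (Gelfand, Proposition 4.5).
-/

open Matrix BigOperators

namespace Stmt1

variable (F : Type*) [Field F] [Fintype F] [DecidableEq F]

noncomputable instance {n : ℕ} : Fintype (GL (Fin n) F) :=
  inferInstanceAs (Fintype (Matrix (Fin n) (Fin n) F)ˣ)

/-- A matrix is upper triangular unipotent. -/
def IsUnip {n : ℕ} (u : Matrix (Fin n) (Fin n) F) : Prop :=
  (∀ i, u i i = 1) ∧ ∀ i j : Fin n, (j : ℕ) < (i : ℕ) → u i j = 0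

open scoped Classical in
/-- The subgroup `U_n(F)` of upper triangular unipotent matrices, as a finset of `GL n F`. -/
noncomputable def UnipFinset (n : ℕ) : Finset (GL (Fin n) F) :=
  Finset.univ.filter fun u => IsUnip F (u : Matrix (Fin n) (Fin n) F)

/-- The sum of the superdiagonal entries of a matrix. -/
def superdiag {n : ℕ} (u : Matrix (Fin n) (Fin n) F) : F :=
  ∑ i : Fin n, ∑ j : Fin n, if (j : ℕ) = (i : ℕ) + 1 then u i j else 0

variable {F}

/-- The character `ψ_n` of `U_n(F)`: `ψ_n(u) = ψ(u_{1,2} + ⋯ + u_{n-1,n})`,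
as a complex-valued function on `GL n F`. -/
noncomputable def psiN (ψ : AddChar F ℂˣ) {n : ℕ} (u : GL (Fin n) F) : ℂ :=
  (ψ (superdiag F (u : Matrix (Fin n) (Fin n) F)) : ℂˣ)

/-- `lam` is a `χ`-Whittaker functional for `π`. -/
def IsWhittaker {n : ℕ} {V : Type*} [AddCommGroup V] [Module ℂ V]
    (π : Representation ℂ (GL (Fin n) F) V) (χ : GL (Fin n) F → ℂ)
    (lam : V →ₗ[ℂ] ℂ) : Prop :=
  ∀ u : GL (Fin n) F, IsUnip F (u : Matrix (Fin n) (Fin n) F) →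
    ∀ v : V, lam (π u v) = χ u * lam v

/-- `π` is irreducible: the only invariant subspaces are `⊥` and `⊤`. -/
def IsIrreducible {n : ℕ} {V : Type*} [AddCommGroup V] [Module ℂ V]
    (π : Representation ℂ (GL (Fin n) F) V) : Prop :=
  ∀ W : Submodule ℂ V, (∀ g v, v ∈ W → π g v ∈ W) → W = ⊥ ∨ W = ⊤

/-- The normalized Bessel function
`J_{π,θ}(g) = |U_n(F)|⁻¹ ∑_{u ∈ U_n(F)} χ_π(gu) θ(u)⁻¹`. -/
noncomputable def Bessel {n : ℕ} {V : Type*} [AddCommGroup V] [Module ℂ V]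
    (π : Representation ℂ (GL (Fin n) F) V) (θ : GL (Fin n) F → ℂ)
    (g : GL (Fin n) F) : ℂ :=
  ((UnipFinset F n).card : ℂ)⁻¹ *
    ∑ u ∈ UnipFinset F n, LinearMap.trace ℂ V (π (g * u)) * (θ u)⁻¹

lemma IsUnip.mul {n : ℕ} {u v : Matrix (Fin n) (Fin n) F} (hu : IsUnip F u) (hv : IsUnip F v) :
    IsUnip F (u * v) := by
  constructor
  · intro i
    rw [Matrix.mul_apply, Finset.sum_eq_single i]
    · rw [hu.1, hv.1, one_mul]
    · intro k _ hk
      rcases lt_or_gt_of_ne hk with h | h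
      · rw [hu.2 i k h, zero_mul]
      · rw [hv.2 k i h, mul_zero]
    · simp
  · intro i j hij
    rw [Matrix.mul_apply]
    apply Finset.sum_eq_zero
    intro k _
    by_cases h : (k : ℕ) < i
    · rw [hu.2 i k h, zero_mul]
    · rw [hv.2 k j (by omega), mul_zero]

lemma IsUnip.one {n : ℕ} : IsUnip F (1 : Matrix (Fin n) (Fin n) F) := by
  constructor
  · intro i; simp
  · intro i j hij
    apply Matrix.one_apply_ne
    intro h; subst h; omega

lemma IsUnip.exists_gl {n : ℕ} {u : Matrix (Fin n) (Fin n) F} (hu : IsUnip F u) :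
    ∃ U : GL (Fin n) F, (U : Matrix (Fin n) (Fin n) F) = u := by
  have hd : u.det = 1 := by
    rw [Matrix.det_of_isUpperTriangular]
    · exact Finset.prod_eq_one fun i _ => hu.1 i
    · intro i j hij
      exact hu.2 i j hij
  exact ⟨Matrix.GeneralLinearGroup.mkOfDetNeZero u (by rw [hd]; exact one_ne_zero), rfl⟩

lemma superdiag_mul {n : ℕ} {u v : Matrix (Fin n) (Fin n) F} (hu : IsUnip F u) (hv : IsUnip F v) :
    superdiag F (u * v) = superdiag F u + superdiag F v := by
  unfold superdiag
  rw [← Finset.sum_add_distrib]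
  refine Finset.sum_congr rfl fun i _ => ?_
  rw [← Finset.sum_add_distrib]
  refine Finset.sum_congr rfl fun j _ => ?_
  split_ifs with h
  · have hij : i ≠ j := by intro h'; subst h'; omega
    rw [Matrix.mul_apply, Finset.sum_eq_add i j hij]
    · rw [hu.1, hv.1, one_mul, mul_one, add_comm]
    · rintro k _ ⟨h1, h2⟩
      by_cases hk : (k : ℕ) < i
      · rw [hu.2 i k hk, zero_mul]
      · have h1' : (k : ℕ) ≠ i := fun h => h1 (Fin.ext h)
        have h2' : (k : ℕ) ≠ j := fun h => h2 (Fin.ext h)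
        rw [hv.2 k j (by omega), mul_zero]
    · simp
    · simp
  · simp

lemma superdiag_one {n : ℕ} : superdiag F (1 : Matrix (Fin n) (Fin n) F) = 0 := by
  unfold superdiag
  refine Finset.sum_eq_zero fun i _ => Finset.sum_eq_zero fun j _ => ?_
  split_ifs with h
  · apply Matrix.one_apply_ne
    intro h'; subst h'; omega
  · rfl

/-- The subgroup of unipotent elements. -/
def unipSubmonoid (n : ℕ) : Submonoid (GL (Fin n) F) where
  carrier := {u | IsUnip F (u : Matrix (Fin n) (Fin n) F)}
  one_mem' := by simpa using IsUnip.one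
  mul_mem' := by
    intro a b ha hb
    simpa using IsUnip.mul ha hb


lemma psiN_mul (ψ : AddChar F ℂˣ) {n : ℕ} {u v : GL (Fin n) F}
    (hu : IsUnip F (u : Matrix (Fin n) (Fin n) F)) (hv : IsUnip F (v : Matrix (Fin n) (Fin n) F)) :
    psiN ψ (u * v) = psiN ψ u * psiN ψ v := by
  unfold psiN
  rw [Units.val_mul, superdiag_mul hu hv, AddChar.map_add_eq_mul, Units.val_mul]

lemma psiN_ne (ψ : AddChar F ℂˣ) {n : ℕ} (u : GL (Fin n) F) : psiN ψ u ≠ 0 := Units.ne_zero _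

lemma isUnip_inv {n : ℕ} {u : GL (Fin n) F}
    (hu : IsUnip F (u : Matrix (Fin n) (Fin n) F)) :
    IsUnip F ((u⁻¹ : GL (Fin n) F) : Matrix (Fin n) (Fin n) F) := by
  have h1 : u⁻¹ = u ^ (Fintype.card (GL (Fin n) F) - 1) := by
    rw [inv_eq_iff_mul_eq_one, ← pow_succ', Nat.sub_add_cancel Fintype.card_pos, pow_card_eq_one]
  rw [h1]
  exact Submonoid.pow_mem (unipSubmonoid n) (show u ∈ unipSubmonoid n from hu) _

lemma mem_unip {n : ℕ} {u : GL (Fin n) F} :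
    u ∈ UnipFinset F n ↔ IsUnip F (u : Matrix (Fin n) (Fin n) F) := by
  simp [UnipFinset]

/-- The anti-involution on matrices. -/
def tauM {n : ℕ} (A : Matrix (Fin n) (Fin n) F) : Matrix (Fin n) (Fin n) F :=
  Matrix.of fun i j => A (Fin.rev j) (Fin.rev i)

lemma tauM_mul {n : ℕ} (A B : Matrix (Fin n) (Fin n) F) : tauM (A * B) = tauM B * tauM A := by
  ext i j
  simp only [tauM, Matrix.mul_apply, Matrix.of_apply]
  rw [← Equiv.sum_comp Fin.revPerm]
  refine Finset.sum_congr rfl fun k _ => ?_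
  simp [mul_comm]

lemma tauM_one {n : ℕ} : tauM (1 : Matrix (Fin n) (Fin n) F) = 1 := by
  ext i j
  simp [tauM, Matrix.one_apply, eq_comm]

/-- The anti-involution on the group. -/
def tau {n : ℕ} (g : GL (Fin n) F) : GL (Fin n) F where
  val := tauM g
  inv := tauM (g⁻¹ : GL (Fin n) F)
  val_inv := by rw [← tauM_mul, ← Units.val_mul]; simp [tauM_one]
  inv_val := by rw [← tauM_mul, ← Units.val_mul]; simp [tauM_one]

lemma tau_val {n : ℕ} (g : GL (Fin n) F) : (tau g : Matrix (Fin n) (Fin n) F) = tauM g := rfl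

lemma tau_mul {n : ℕ} (g h : GL (Fin n) F) : tau (g * h) = tau h * tau g := by
  apply Units.ext
  rw [Units.val_mul, tau_val, tau_val, tau_val, Units.val_mul, tauM_mul]

lemma tau_tau {n : ℕ} (g : GL (Fin n) F) : tau (tau g) = g := by
  apply Units.ext
  rw [tau_val, tau_val]
  ext i j
  simp [tauM]

lemma tau_unip {n : ℕ} {g : GL (Fin n) F} (h : IsUnip F (g : Matrix (Fin n) (Fin n) F)) :
    IsUnip F (tau g : Matrix (Fin n) (Fin n) F) := by
  rw [tau_val]
  constructor
  · intro i; simp [tauM, h.1]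
  · intro i j hij
    simp only [tauM, Matrix.of_apply]
    apply h.2
    simp only [Fin.val_rev]
    omega

lemma psiN_tau (ψ : AddChar F ℂˣ) {n : ℕ} (g : GL (Fin n) F) : psiN ψ (tau g) = psiN ψ g := by
  unfold psiN
  congr 2
  rw [tau_val]
  unfold superdiag
  rw [← Equiv.sum_comp Fin.revPerm, Finset.sum_comm, ← Equiv.sum_comp Fin.revPerm]
  refine Finset.sum_congr rfl fun i _ => Finset.sum_congr rfl fun j _ => ?_
  simp only [tauM, Matrix.of_apply, Fin.revPerm_apply, Fin.rev_rev, Fin.val_rev]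
  have h : (n - ((i : ℕ) + 1) = n - ((j : ℕ) + 1) + 1) ↔ (j : ℕ) = i + 1 := by omega
  simp only [h]

lemma comb {α : Type*} (n : ℕ) (r : ℕ → ℕ) (d : ℕ → α) (hr : ∀ i < n, r i < n)
    (inj : ∀ i < n, ∀ j < n, r i = r j → i = j)
    (step : ∀ j, j + 1 < n → r j < r (j + 1) ∨ (r (j + 1) + 1 = r j ∧ d (j + 1) = d j)) :
    ∀ i < n, r (r i) = i ∧ d (r i) = d i := by
  have L : ∀ k i, i + k < n → r (i + k) < r i →
      ∀ c ≤ k, r (i + c) + c = r i ∧ d (i + c) = d i := by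
    intro k
    induction k with
    | zero => intro i _ h; simp at h
    | succ k ih =>
      intro i hik h c hc
      rcases step i (by omega) with h1 | ⟨h1, h2⟩
      · exfalso
        have e : i + (k + 1) = i + 1 + k := by ring
        rw [e] at h
        have H := ih (i + 1) (by omega) (by omega)
        have H1 := (H k le_rfl).1
        have H2 := (H (r (i + 1) - r i) (by omega)).1
        have := inj (i + 1 + (r (i + 1) - r i)) (by omega) i (by omega) (by omega)
        omega
      · rcases Nat.eq_zero_or_pos c with rfl | hc0
        · simp
        have e : i + (k + 1) = i + 1 + k := by ring
        rw [e] at h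
        by_cases hk : k = 0
        · obtain rfl : c = 1 := by omega
          exact ⟨h1, h2⟩
        · have hne : r (i + 1 + k) ≠ r (i + 1) := by
            intro h'
            have := inj _ (by omega) _ (by omega) h'
            omega
          have H := ih (i + 1) (by omega) (by omega) (c - 1) (by omega)
          have e2 : i + 1 + (c - 1) = i + c := by omega
          rw [e2] at H
          exact ⟨by omega, H.2.trans h2⟩
  intro i hi
  rcases lt_trichotomy (r i) i with h | h | h
  · -- some `j < i` with `i ≤ r j`
    have : ∃ j < i, i ≤ r j := by
      by_contra! hcon
      have : Set.MapsTo r (Finset.range (i + 1)) (Finset.range i) := by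
        intro x hx
        simp only [Finset.coe_range, Set.mem_Iio] at hx ⊢
        rcases Nat.lt_succ_iff_lt_or_eq.mp hx with h' | rfl
        · exact hcon x h'
        · exact h
      obtain ⟨x, hx, y, hy, hxy, he⟩ :=
        Finset.exists_ne_map_eq_of_card_lt_of_maps_to (by simp) this
      simp only [Finset.mem_range] at hx hy
      exact hxy (inj x (by omega) y (by omega) he)
    obtain ⟨j, hj, hij⟩ := this
    have e : j + (i - j) = i := by omega
    have H := L (i - j) j (by omega) (by rw [e]; omega)
    have H1 := H (i - j) le_rfl
    rw [e] at H1
    have H2 := H (r i - j) (by omega)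
    have e2 : j + (r i - j) = r i := by omega
    rw [e2] at H2
    exact ⟨by omega, H2.2.trans H1.2.symm⟩
  · rw [h]; exact ⟨h, rfl⟩
  · have : ∃ j < n, i < j ∧ r j ≤ i := by
      by_contra! hcon
      have : Set.MapsTo r (Finset.Ico i n) (Finset.Ico (i + 1) n) := by
        intro x hx
        simp only [Finset.coe_Ico, Set.mem_Ico] at hx ⊢
        refine ⟨?_, hr x hx.2⟩
        rcases Nat.eq_or_lt_of_le hx.1 with rfl | h'
        · exact h
        · exact hcon x hx.2 h'
      obtain ⟨x, hx, y, hy, hxy, he⟩ :=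
        Finset.exists_ne_map_eq_of_card_lt_of_maps_to (by simp; omega) this
      simp only [Finset.mem_Ico] at hx hy
      exact hxy (inj x (by omega) y (by omega) he)
    obtain ⟨j, hj, hij, hj2⟩ := this
    have e : i + (j - i) = j := by omega
    have H := L (j - i) i (by omega) (by rw [e]; omega)
    have H1 := H (j - i) le_rfl
    rw [e] at H1
    have H2 := H (r i - i) (by omega)
    have e2 : i + (r i - i) = r i := by omega
    rw [e2] at H2
    exact ⟨by omega, H2.2⟩

/-- The first `k` columns are monomial. -/
def Good {n : ℕ} (k : ℕ) (A : Matrix (Fin n) (Fin n) F) : Prop :=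
  ∀ j : Fin n, (j : ℕ) < k → ∃ i, A i j ≠ 0 ∧ (∀ i', i' ≠ i → A i' j = 0) ∧
    (∀ j', j' ≠ j → A i j' = 0)

lemma bruhat_step {n : ℕ} (A : Matrix (Fin n) (Fin n) F) (k : Fin n) (hk : Good k A)
    (hA : ∃ i, A i k ≠ 0) :
    ∃ u v : Matrix (Fin n) (Fin n) F, IsUnip F u ∧ IsUnip F v ∧ Good (k + 1) (u * A * v) := by
  classical
  obtain ⟨i, hi, hmax⟩ : ∃ i, A i k ≠ 0 ∧ ∀ i', i < i' → A i' k = 0 := by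
    have hne : (Finset.univ.filter fun i => A i k ≠ 0).Nonempty := by
      obtain ⟨i, hi⟩ := hA
      exact ⟨i, by simpa using hi⟩
    refine ⟨Finset.max' _ hne, ?_, ?_⟩
    · simpa using Finset.max'_mem _ hne
    · intro i' h
      by_contra hc
      exact absurd (Finset.le_max' _ i' (by simpa using hc)) (not_le.mpr h)
  -- row `i` vanishes in the columns before `k`
  have hrow : ∀ j : Fin n, j < k → A i j = 0 := by
    intro j hj
    obtain ⟨p, hp, hp1, hp2⟩ := hk j hj
    apply hp1
    rintro rfl
    exact hi (hp2 k (ne_of_gt hj))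
  let u : Matrix (Fin n) (Fin n) F := Matrix.of fun a b =>
    (if a = b then 1 else 0) - if b = i ∧ a ≠ i then A a k / A i k else 0
  let v : Matrix (Fin n) (Fin n) F := Matrix.of fun a b =>
    (if a = b then 1 else 0) - if a = k ∧ k < b then A i b / A i k else 0
  have huA : ∀ a b, (u * A) a b = A a b - if a ≠ i then A a k / A i k * A i b else 0 := by
    intro a b
    simp only [u, Matrix.mul_apply, Matrix.of_apply, sub_mul, Finset.sum_sub_distrib, ite_and]
    simp
  have hv : ∀ (B : Matrix (Fin n) (Fin n) F) a b,
      (B * v) a b = B a b - if k < b then B a k * (A i b / A i k) else 0 := by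
    intro B a b
    simp only [v, Matrix.mul_apply, Matrix.of_apply, mul_sub, Finset.sum_sub_distrib, ite_and]
    simp
  have huv : ∀ a b, (u * A * v) a b =
      (A a b - if a ≠ i then A a k / A i k * A i b else 0) -
        if k < b ∧ a = i then A i b else 0 := by
    intro a b
    rw [hv, huA, huA]
    by_cases ha : a = i
    · subst ha
      by_cases hb : k < b
      · simp [hb]; field_simp; simp
      · simp [hb]
    · by_cases hb : k < b
      · simp [hb, ha]; left; field_simp; simp
      · simp [hb, ha]
  refine ⟨u, v, ?_, ?_, ?_⟩
  · constructor
    · intro a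
      simp only [u, Matrix.of_apply]
      have : ¬ (a = i ∧ a ≠ i) := by rintro ⟨h1, h2⟩; exact h2 h1
      rw [if_neg this]
      simp
    · intro a b hab
      simp only [u, Matrix.of_apply]
      have hne : a ≠ b := by rintro rfl; omega
      rw [if_neg hne]
      by_cases hb : b = i
      · subst hb
        rw [hmax a hab]; simp
      · simp [hb]
  · constructor
    · intro a
      simp only [v, Matrix.of_apply]
      have : ¬ (a = k ∧ k < a) := by rintro ⟨rfl, h2⟩; exact lt_irrefl _ h2
      rw [if_neg this]
      simp
    · intro a b hab
      simp only [v, Matrix.of_apply]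
      have hne : a ≠ b := by rintro rfl; omega
      rw [if_neg hne, if_neg]
      · simp
      · rintro ⟨rfl, h2⟩
        exact absurd (show b < a from hab) (not_lt.mpr h2.le)
  · intro j hj
    rcases Nat.lt_succ_iff_lt_or_eq.mp hj with hjk | hjk
    · obtain ⟨p, hp, hp1, hp2⟩ := hk j hjk
      have hjk' : j < k := hjk
      have hpi : p ≠ i := by rintro rfl; exact hp (hrow j hjk)
      refine ⟨p, ?_, ?_, ?_⟩
      · rw [huv]; simpa [hpi, hrow j hjk] using hp
      · intro a ha
        rw [huv, hp1 a ha, hrow j hjk]; simp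
      · intro b hb
        rw [huv, hp2 b hb, hp2 k (ne_of_gt hjk')]; simp [hpi]
    · obtain rfl : j = k := Fin.ext hjk
      refine ⟨i, ?_, ?_, ?_⟩
      · rw [huv]; simpa using hi
      · intro a ha
        rw [huv]; simp [ha]; field_simp; simp
      · intro b hb
        rw [huv]
        rcases lt_or_gt_of_ne hb with h | h
        · rw [hrow b h]; simp
        · simp [h]

lemma bruhat {n : ℕ} (g : GL (Fin n) F) (k : ℕ) (hk : k ≤ n) :
    ∃ u v : GL (Fin n) F, IsUnip F (u : Matrix (Fin n) (Fin n) F) ∧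
      IsUnip F (v : Matrix (Fin n) (Fin n) F) ∧
      Good k ((u * g * v : GL (Fin n) F) : Matrix (Fin n) (Fin n) F) := by
  induction k with
  | zero =>
    exact ⟨1, 1, by simpa using IsUnip.one, by simpa using IsUnip.one, fun j hj => by omega⟩
  | succ k ih =>
    obtain ⟨u, v, hu, hv, h⟩ := ih (by omega)
    obtain ⟨u', v', hu', hv', h'⟩ := bruhat_step _ (⟨k, by omega⟩ : Fin n) h (by
      by_contra! hcon
      have hd : (((u * g * v : GL (Fin n) F) : Matrix (Fin n) (Fin n) F)).det = 0 :=
        Matrix.det_eq_zero_of_column_eq_zero _ hcon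
      exact Matrix.GeneralLinearGroup.det_ne_zero _ hd)
    obtain ⟨U, rfl⟩ := hu'.exists_gl
    obtain ⟨V, rfl⟩ := hv'.exists_gl
    refine ⟨U * u, v * V, by simpa using hu'.mul hu, by simpa using hv.mul hv', ?_⟩
    have e : U * u * g * (v * V) = U * (u * g * v) * V := by group
    rw [e]
    simpa using h'

lemma superdiag_transvection {n : ℕ} (i j : Fin n) (a : F) :
    superdiag F (1 + Matrix.single i j a : Matrix (Fin n) (Fin n) F) =
      if (j : ℕ) = i + 1 then a else 0 := by
  have : superdiag F (1 + Matrix.single i j a : Matrix (Fin n) (Fin n) F) =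
      superdiag F (1 : Matrix (Fin n) (Fin n) F) +
      superdiag F (Matrix.single i j a : Matrix (Fin n) (Fin n) F) := by
    unfold superdiag
    simp only [← Finset.sum_add_distrib]
    refine Finset.sum_congr rfl fun i _ => Finset.sum_congr rfl fun j _ => ?_
    split_ifs <;> simp
  rw [this, superdiag_one, zero_add]
  unfold superdiag
  rw [Finset.sum_eq_single i, Finset.sum_eq_single j]
  · simp
  · intro b _ hb; simp [Matrix.single_apply, hb.symm]
  · simp
  · intro b _ hb
    apply Finset.sum_eq_zero
    intro c _
    simp [Matrix.single_apply, hb.symm]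
  · simp

lemma isUnip_transvection {n : ℕ} (i j : Fin n) (a : F) (hij : i < j) :
    IsUnip F (1 + Matrix.single i j a : Matrix (Fin n) (Fin n) F) := by
  constructor
  · intro k
    rw [Matrix.add_apply, Matrix.one_apply_eq, Matrix.single_apply, if_neg, add_zero]
    rintro ⟨rfl, rfl⟩; exact lt_irrefl _ hij
  · intro k l hkl
    rw [Matrix.add_apply, Matrix.one_apply_ne (by rintro rfl; omega), Matrix.single_apply,
      if_neg, add_zero]
    rintro ⟨rfl, rfl⟩
    exact absurd hij (not_lt.mpr (le_of_lt hkl))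

lemma monomial_tau (ψ : AddChar F ℂˣ) (hψ : ∃ a : F, ψ a ≠ 1) {n : ℕ} (m : GL (Fin n) F)
    (hm : Good n (m : Matrix (Fin n) (Fin n) F))
    (hnd : ∀ u v : GL (Fin n) F, IsUnip F (u : Matrix (Fin n) (Fin n) F) →
      IsUnip F (v : Matrix (Fin n) (Fin n) F) → u * m = m * v → psiN ψ u = psiN ψ v) :
    tau m = m := by
  classical
  have hm' := fun j : Fin n => hm j j.2
  choose σ h0 h1 h2 using hm'
  have σinj : Function.Injective σ := by
    intro a b hab
    by_contra hne
    have := h2 b a hne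
    rw [← hab] at this
    exact h0 a this
  obtain ⟨a0, ha0⟩ := hψ
  have key : ∀ j j' : Fin n, (j' : ℕ) = j + 1 → σ j < σ j' →
      (σ j' : ℕ) = σ j + 1 ∧ m (σ j') j' = m (σ j) j := by
    intro j j' hj hσ
    have hψeq : ∀ a : F, ψ (if (σ j' : ℕ) = σ j + 1 then a * m (σ j) j / m (σ j') j' else 0)
        = ψ a := by
      intro a
      obtain ⟨u, hu⟩ := (isUnip_transvection (σ j) (σ j') (a * m (σ j) j / m (σ j') j')
        hσ).exists_gl
      have hjj : j < j' := by rw [Fin.lt_def]; omega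
      obtain ⟨v, hv⟩ := (isUnip_transvection j j' a hjj).exists_gl
      have := hnd u v (by rw [hu]; exact isUnip_transvection _ _ _ hσ)
        (by rw [hv]; exact isUnip_transvection _ _ _ hjj) (by
          apply Units.ext
          rw [Units.val_mul, Units.val_mul, hu, hv, add_mul, mul_add, one_mul, mul_one]
          congr 1
          ext x y
          have hL : (Matrix.single (σ j) (σ j') (a * m (σ j) j / m (σ j') j') *
              (m : Matrix (Fin n) (Fin n) F)) x y =
              if x = σ j then a * m (σ j) j / m (σ j') j' * m (σ j') y else 0 := by
            by_cases hx : x = σ j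
            · subst hx; simp
            · simp [Matrix.mul_apply, Matrix.single_apply, hx, Ne.symm hx]
          have hR : ((m : Matrix (Fin n) (Fin n) F) * Matrix.single j j' a) x y =
              if y = j' then m x j * a else 0 := by
            by_cases hy : y = j'
            · subst hy; simp
            · simp [Matrix.mul_apply, Matrix.single_apply, hy, Ne.symm hy]
          rw [hL, hR]
          by_cases hx : x = σ j
          · subst hx
            by_cases hy : y = j'
            · subst hy
              have := h0 y
              simp; field_simp
            · simp [hy, h2 j' y hy]
          · simp [hx, h1 j x hx])
      unfold psiN at this
      rw [hu, hv, superdiag_transvection, superdiag_transvection, if_pos hj] at this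
      exact Units.ext this
    by_cases hc : (σ j' : ℕ) = σ j + 1
    · refine ⟨hc, ?_⟩
      simp only [if_pos hc] at hψeq
      by_contra hne
      have hs : m (σ j) j / m (σ j') j' - 1 ≠ 0 := by
        intro h
        rw [sub_eq_zero, div_eq_one_iff_eq (h0 j')] at h
        exact hne h.symm
      apply ha0
      have := hψeq (a0 / (m (σ j) j / m (σ j') j' - 1))
      have e : a0 = a0 / (m (σ j) j / m (σ j') j' - 1) * m (σ j) j / m (σ j') j' -
          a0 / (m (σ j) j / m (σ j') j' - 1) := by
        generalize hx : a0 / (m (σ j) j / m (σ j') j' - 1) = x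
        rw [div_eq_iff hs] at hx
        rw [hx]; ring
      rw [e, AddChar.map_sub_eq_div, this, div_self']
    · exfalso
      apply ha0
      have := hψeq a0
      rw [if_neg hc, AddChar.map_zero_eq_one] at this
      exact this.symm
  have C := comb n (fun j => if h : j < n then ((Fin.rev (σ ⟨j, h⟩) : Fin n) : ℕ) else 0)
    (fun j => if h : j < n then m (σ ⟨j, h⟩) ⟨j, h⟩ else 0)
    (by intro i hi; simp only [dif_pos hi]; exact Fin.is_lt _)
    (by
      intro i hi j hj h
      simp only [dif_pos hi, dif_pos hj] at h
      have := σinj (Fin.rev_injective (Fin.ext h))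
      simpa using this)
    (by
      intro j hj
      have hj' : j < n := by omega
      simp only [dif_pos hj, dif_pos hj', Fin.val_rev]
      rcases lt_trichotomy (σ ⟨j, hj'⟩) (σ ⟨j + 1, hj⟩) with h | h | h
      · right
        have := key ⟨j, hj'⟩ ⟨j + 1, hj⟩ rfl h
        exact ⟨by have := (σ ⟨j + 1, hj⟩).2; omega, this.2⟩
      · have := σinj h
        simp at this
      · left
        rw [Fin.lt_def] at h
        have := (σ ⟨j, hj'⟩).2
        omega)
  have C1 : ∀ j : Fin n, Fin.rev (σ (Fin.rev (σ j))) = j := by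
    intro j
    have := (C j j.2).1
    simp only [Fin.is_lt, dif_pos, Fin.eta] at this
    exact Fin.ext this
  have C2 : ∀ j : Fin n, m (σ (Fin.rev (σ j))) (Fin.rev (σ j)) = m (σ j) j := by
    intro j
    have := (C j j.2).2
    simpa only [Fin.is_lt, dif_pos, Fin.eta] using this
  apply Units.ext
  rw [tau_val]
  ext i j
  simp only [tauM, Matrix.of_apply]
  by_cases h : i = σ j
  · subst h
    have e : Fin.rev j = σ (Fin.rev (σ j)) := by
      rw [Fin.rev_eq_iff]; exact (C1 j).symm
    rw [e]
    exact C2 j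
  · rw [h1 j i h]
    apply h1
    intro h'
    apply h
    have : Fin.rev (σ (Fin.rev i)) = j := by rw [← h', Fin.rev_rev]
    rw [← this]
    exact Fin.rev_injective (C1 _).symm

section rep

variable {n : ℕ} {V : Type*} [AddCommGroup V] [Module ℂ V]

/-- The projection onto the `ψ_n`-isotypic part. -/
noncomputable def eproj (ψ : AddChar F ℂˣ) (π : Representation ℂ (GL (Fin n) F) V) :
    V →ₗ[ℂ] V :=
  ((UnipFinset F n).card : ℂ)⁻¹ • ∑ u ∈ UnipFinset F n, (psiN ψ u)⁻¹ • π u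

lemma card_ne : ((UnipFinset F n).card : ℂ) ≠ 0 := by
  have : (1 : GL (Fin n) F) ∈ UnipFinset F n := mem_unip.mpr (by simpa using IsUnip.one)
  exact_mod_cast (Finset.card_pos.mpr ⟨1, this⟩).ne'

lemma sum_conj (ψ : AddChar F ℂˣ) (π : Representation ℂ (GL (Fin n) F) V)
    (A B : V →ₗ[ℂ] V) : A * eproj ψ π * B =
      ((UnipFinset F n).card : ℂ)⁻¹ • ∑ u ∈ UnipFinset F n, (psiN ψ u)⁻¹ • (A * π u * B) := by
  simp only [eproj, mul_smul_comm, smul_mul_assoc, Finset.mul_sum, Finset.sum_mul]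

lemma e_mul (ψ : AddChar F ℂˣ) (π : Representation ℂ (GL (Fin n) F) V) {u : GL (Fin n) F}
    (hu : IsUnip F (u : Matrix (Fin n) (Fin n) F)) :
    eproj ψ π * π u = psiN ψ u • eproj ψ π := by
  have h := sum_conj ψ π 1 (π u)
  rw [one_mul] at h
  rw [h, eproj, smul_comm, Finset.smul_sum (r := psiN ψ u)]
  congr 1
  refine Finset.sum_bij' (fun x _ => x * u) (fun x _ => x * u⁻¹) ?_ ?_ ?_ ?_ ?_
  · intro x hx
    rw [mem_unip] at hx ⊢
    simpa using hx.mul hu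
  · intro x hx
    rw [mem_unip] at hx ⊢
    rw [Units.val_mul]
    exact hx.mul (isUnip_inv hu)
  · intro x _; simp
  · intro x _; simp
  · intro x hx
    rw [mem_unip] at hx
    rw [one_mul, map_mul, psiN_mul ψ hx hu, smul_smul, mul_inv]
    congr 1
    have := psiN_ne ψ u
    field_simp

lemma mul_e (ψ : AddChar F ℂˣ) (π : Representation ℂ (GL (Fin n) F) V) {u : GL (Fin n) F}
    (hu : IsUnip F (u : Matrix (Fin n) (Fin n) F)) :
    π u * eproj ψ π = psiN ψ u • eproj ψ π := by
  have h := sum_conj ψ π (π u) 1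
  rw [mul_one] at h
  rw [h, eproj, smul_comm, Finset.smul_sum (r := psiN ψ u)]
  congr 1
  refine Finset.sum_bij' (fun x _ => u * x) (fun x _ => u⁻¹ * x) ?_ ?_ ?_ ?_ ?_
  · intro x hx
    rw [mem_unip] at hx ⊢
    simpa using hu.mul hx
  · intro x hx
    rw [mem_unip] at hx ⊢
    rw [Units.val_mul]
    exact (isUnip_inv hu).mul hx
  · intro x _; simp
  · intro x _; simp
  · intro x hx
    rw [mem_unip] at hx
    rw [mul_one, map_mul, psiN_mul ψ hu hx, smul_smul, mul_inv]
    congr 1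
    have := psiN_ne ψ u
    field_simp

lemma e_idem (ψ : AddChar F ℂˣ) (π : Representation ℂ (GL (Fin n) F) V) :
    eproj ψ π * eproj ψ π = eproj ψ π := by
  have h := sum_conj ψ π 1 (eproj ψ π)
  rw [one_mul] at h
  rw [h]
  have : ∀ u ∈ UnipFinset F n, (psiN ψ u)⁻¹ • (1 * π u * eproj ψ π) = eproj ψ π := by
    intro u hu
    rw [one_mul, mul_e ψ π (mem_unip.mp hu), smul_smul, inv_mul_cancel₀ (psiN_ne ψ u), one_smul]
  rw [Finset.sum_congr rfl this, Finset.sum_const, ← Nat.cast_smul_eq_nsmul ℂ, smul_smul,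
    inv_mul_cancel₀ card_ne, one_smul]

lemma B_tau (ψ : AddChar F ℂˣ) (hψ : ∃ a : F, ψ a ≠ 1)
    (π : Representation ℂ (GL (Fin n) F) V) (g : GL (Fin n) F) :
    eproj ψ π * π (tau g) * eproj ψ π = eproj ψ π * π g * eproj ψ π := by
  set e := eproj ψ π with he
  have hbi : ∀ u v g : GL (Fin n) F, IsUnip F (u : Matrix (Fin n) (Fin n) F) →
      IsUnip F (v : Matrix (Fin n) (Fin n) F) →
      e * π (u * g * v) * e = (psiN ψ u * psiN ψ v) • (e * π g * e) := by
    intro u v g hu hv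
    have : e * π (u * g * v) * e = (e * π u) * π g * (π v * e) := by
      simp only [map_mul, mul_assoc]
    rw [this, e_mul ψ π hu, mul_e ψ π hv, mul_smul_comm, smul_mul_assoc, smul_mul_assoc, smul_smul,
      mul_comm (psiN ψ u)]
  have hone : IsUnip F ((1 : GL (Fin n) F) : Matrix (Fin n) (Fin n) F) := by
    simpa using IsUnip.one
  have hpone : psiN ψ (1 : GL (Fin n) F) = 1 := by
    simp [psiN, superdiag_one]
  have hdeg : ∀ u v m : GL (Fin n) F, IsUnip F (u : Matrix (Fin n) (Fin n) F) →
      IsUnip F (v : Matrix (Fin n) (Fin n) F) → u * m = m * v → psiN ψ u ≠ psiN ψ v →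
      e * π m * e = 0 := by
    intro u v m hu hv h hne
    have h1 := hbi u 1 m hu hone
    have h2 := hbi 1 v m hone hv
    rw [mul_one, h, hpone, mul_one] at h1
    rw [one_mul, hpone, one_mul] at h2
    rw [h1] at h2
    have h3 : (psiN ψ u - psiN ψ v) • (e * π m * e) = 0 := by rw [sub_smul, h2, sub_self]
    exact (smul_eq_zero.mp h3).resolve_left (sub_ne_zero.mpr hne)
  obtain ⟨u, v, hu, hv, hG⟩ := bruhat g n le_rfl
  set m := u * g * v with hm
  have hmm : e * π (tau m) * e = e * π m * e := by
    by_cases hnd : ∀ u v : GL (Fin n) F, IsUnip F (u : Matrix (Fin n) (Fin n) F) →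
      IsUnip F (v : Matrix (Fin n) (Fin n) F) → u * m = m * v → psiN ψ u = psiN ψ v
    · rw [monomial_tau ψ hψ m hG hnd]
    · push Not at hnd
      obtain ⟨a, b, ha, hb, hab, hne⟩ := hnd
      rw [hdeg a b m ha hb hab hne]
      apply hdeg (tau b) (tau a) (tau m) (tau_unip hb) (tau_unip ha)
      · rw [← tau_mul, ← tau_mul, hab]
      · rw [psiN_tau, psiN_tau]; exact hne.symm
  have h1 := hbi u v g hu hv
  have h2 := hbi (tau v) (tau u) (tau g) (tau_unip hv) (tau_unip hu)
  have h3 : tau m = tau v * tau g * tau u := by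
    rw [hm, tau_mul, tau_mul, mul_assoc]
  rw [← h3, hmm, hm, h1, psiN_tau, psiN_tau, mul_comm (psiN ψ v)] at h2
  exact (smul_right_injective _ (mul_ne_zero (psiN_ne ψ u) (psiN_ne ψ v)) h2).symm

lemma B_comm (ψ : AddChar F ℂˣ) (hψ : ∃ a : F, ψ a ≠ 1)
    (π : Representation ℂ (GL (Fin n) F) V) (g h : GL (Fin n) F) :
    eproj ψ π * π g * eproj ψ π * π h * eproj ψ π =
      eproj ψ π * π h * eproj ψ π * π g * eproj ψ π := by
  have key : eproj ψ π * π g * eproj ψ π * π h * eproj ψ π =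
      eproj ψ π * π (tau h) * eproj ψ π * π (tau g) * eproj ψ π := by
    have l := sum_conj ψ π (eproj ψ π * π g) (π h * eproj ψ π)
    have r := sum_conj ψ π (eproj ψ π * π (tau h)) (π (tau g) * eproj ψ π)
    rw [← mul_assoc] at l r
    rw [l, r]
    congr 1
    refine Finset.sum_bij' (fun x _ => tau x) (fun x _ => tau x) ?_ ?_ ?_ ?_ ?_
    · intro x hx
      exact mem_unip.mpr (tau_unip (mem_unip.mp hx))
    · intro x hx
      exact mem_unip.mpr (tau_unip (mem_unip.mp hx))
    · intro x _; exact tau_tau x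
    · intro x _; exact tau_tau x
    · intro x _
      rw [psiN_tau]
      congr 1
      have := B_tau ψ hψ π (g * x * h)
      rw [tau_mul, tau_mul] at this
      simp only [map_mul, mul_assoc] at this ⊢
      exact this.symm
  have h1 := B_tau ψ hψ π g
  rw [key, B_tau ψ hψ π h]
  have h2 := e_idem ψ π
  calc eproj ψ π * π h * eproj ψ π * π (tau g) * eproj ψ π
      = eproj ψ π * π h * (eproj ψ π * π (tau g) * eproj ψ π) := by simp only [mul_assoc]
    _ = _ := by rw [h1]; simp only [mul_assoc]

end rep

lemma bessel_main
    (ψ : AddChar F ℂˣ) (hψ : ∃ a : F, ψ a ≠ 1)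
    (n : ℕ)
    {V : Type*} [AddCommGroup V] [Module ℂ V] [FiniteDimensional ℂ V] [Nontrivial V]
    (π : Representation ℂ (GL (Fin n) F) V)
    (hπirr : IsIrreducible π)
    (hπgen : ∃ lam : V →ₗ[ℂ] ℂ, lam ≠ 0 ∧ IsWhittaker π (psiN ψ) lam) :
    (∀ u₁ u₂ g : GL (Fin n) F,
        IsUnip F (u₁ : Matrix (Fin n) (Fin n) F) →
        IsUnip F (u₂ : Matrix (Fin n) (Fin n) F) →
        Bessel π (psiN ψ) (u₁ * g * u₂) = psiN ψ u₁ * psiN ψ u₂ * Bessel π (psiN ψ) g) ∧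
    Bessel π (psiN ψ) 1 = 1 ∧
    (∃ lam : V →ₗ[ℂ] ℂ, lam ≠ 0 ∧ IsWhittaker π (psiN ψ) lam ∧
      ∃ v : V, ∀ g : GL (Fin n) F, Bessel π (psiN ψ) g = lam (π g v)) := by
  set e := eproj ψ π with he
  have hB : ∀ g, Bessel π (psiN ψ) g = LinearMap.trace ℂ V (π g * e) := by
    intro g
    have h := sum_conj ψ π (π g) 1
    rw [mul_one] at h
    rw [h, map_smul, map_sum, smul_eq_mul, Bessel]
    congr 1
    refine Finset.sum_congr rfl fun u _ => ?_
    rw [map_smul, smul_eq_mul, mul_one, map_mul, mul_comm]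
  have hne : e ≠ 0 := by
    obtain ⟨lam, h0, hl⟩ := hπgen
    intro h
    apply h0
    ext v
    have : lam (e v) = lam v := by
      rw [he, eproj]
      simp only [LinearMap.smul_apply, LinearMap.sum_apply, map_smul, map_sum]
      have : ∀ u ∈ UnipFinset F n, (psiN ψ u)⁻¹ • lam (π u v) = lam v := by
        intro u hu
        rw [hl u (mem_unip.mp hu), smul_eq_mul, ← mul_assoc, inv_mul_cancel₀ (psiN_ne ψ u), one_mul]
      rw [Finset.sum_congr rfl this, Finset.sum_const, ← Nat.cast_smul_eq_nsmul ℂ, smul_smul,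
        inv_mul_cancel₀ card_ne, one_smul]
    rw [← this, h]; simp
  have hee : ∀ v, e (e v) = e v := fun v => LinearMap.congr_fun (e_idem ψ π) v
  -- spanning
  have hspan : ∀ w : V, w ≠ 0 → Submodule.span ℂ (Set.range fun g => π g w) = ⊤ := by
    intro w hw
    refine (hπirr _ ?_).resolve_left ?_
    · intro g v hv
      have : Submodule.span ℂ (Set.range fun g => π g w) ≤
          (Submodule.span ℂ (Set.range fun g => π g w)).comap (π g) := by
        rw [Submodule.span_le]
        rintro _ ⟨h, rfl⟩
        apply Submodule.subset_span
        exact ⟨g * h, by simp⟩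
      exact this hv
    · intro h
      apply hw
      have : w ∈ Submodule.span ℂ (Set.range fun g => π g w) :=
        Submodule.subset_span ⟨1, by simp⟩
      rw [h] at this
      simpa using this
  have hscalar : ∀ h : GL (Fin n) F, ∃ μ : ℂ, ∀ v, e (π h (e v)) = μ • e v := by
    intro h
    let W := LinearMap.range e
    have hW : ∀ x ∈ W, (e * π h) x ∈ W := fun x _ => ⟨π h x, rfl⟩
    have : Nontrivial W := by
      rw [Submodule.nontrivial_iff_ne_bot]
      intro hb
      exact hne (LinearMap.range_eq_bot.mp hb)
    obtain ⟨μ, hμ⟩ := Module.End.exists_eigenvalue ((e * π h).restrict hW)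
    obtain ⟨w, hw⟩ := hμ.exists_hasEigenvector
    have hw1 : e (π h w) = μ • (w : V) := congrArg Subtype.val hw.apply_eq_smul
    have hw0 : (w : V) ≠ 0 := fun h => hw.2 (Subtype.ext h)
    obtain ⟨w0, hw0'⟩ := w.2
    have hew : e (w : V) = w := by rw [← hw0', hee]
    refine ⟨μ, fun v => ?_⟩
    have hv : v ∈ Submodule.span ℂ (Set.range fun g => π g (w : V)) := by
      rw [hspan _ hw0]; trivial
    have : Submodule.span ℂ (Set.range fun g => π g (w : V)) ≤
        LinearMap.ker (e * π h * e - μ • e) := by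
      rw [Submodule.span_le]
      rintro _ ⟨g, rfl⟩
      have hc := LinearMap.congr_fun (B_comm ψ hψ π h g) (w : V)
      simp only [Module.End.mul_apply, ← he] at hc
      rw [hew, hw1] at hc
      simp [hc]
    have := this hv
    simpa [sub_eq_zero] using this
  obtain ⟨v0, hv0⟩ : ∃ v, e v ≠ 0 := by
    by_contra! h
    exact hne (LinearMap.ext h)
  set w := e v0 with hw
  have hew : e w = w := hee v0
  have hline : ∀ v, ∃ c : ℂ, e v = c • w := by
    intro v
    have hv : v ∈ Submodule.span ℂ (Set.range fun g => π g w) := by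
      rw [hspan _ hv0]; trivial
    have : Submodule.span ℂ (Set.range fun g => π g w) ≤
        (Submodule.span ℂ {w}).comap e := by
      rw [Submodule.span_le]
      rintro _ ⟨g, rfl⟩
      obtain ⟨μ, hμ⟩ := hscalar g
      exact Submodule.mem_span_singleton.mpr ⟨μ, (hμ v0).symm⟩
    obtain ⟨c, hc⟩ := Submodule.mem_span_singleton.mp (this hv)
    exact ⟨c, hc.symm⟩
  obtain ⟨f, hf⟩ : ∃ f : V →ₗ[ℂ] ℂ, f w = 1 := by
    obtain ⟨f, hf⟩ := Module.Projective.exists_dual_ne_zero ℂ hv0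
    exact ⟨(f w)⁻¹ • f, by simp [inv_mul_cancel₀ hf]⟩
  let lam : V →ₗ[ℂ] ℂ := f ∘ₗ e
  have hlam : ∀ v, e v = lam v • w := by
    intro v
    obtain ⟨c, hc⟩ := hline v
    simp only [lam, LinearMap.comp_apply, hc, map_smul, hf, smul_eq_mul, mul_one]
  have hJ : ∀ g, Bessel π (psiN ψ) g = lam (π g w) := by
    intro g
    rw [hB]
    have : π g * e = lam.smulRight (π g w) := by
      ext v
      simp [hlam v]
    rw [this, LinearMap.trace_smulRight]
  refine ⟨?_, ?_, lam, ?_, ?_, w, hJ⟩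
  · intro u₁ u₂ g h1 h2
    rw [hB, hB]
    have a : π (u₁ * g * u₂) * e = psiN ψ u₂ • (π u₁ * (π g * e)) := by
      rw [map_mul, map_mul, mul_assoc, mul_e ψ π h2, mul_smul_comm, mul_assoc]
    rw [a, map_smul, LinearMap.trace_mul_comm, mul_assoc, e_mul ψ π h1, mul_smul_comm, map_smul]
    simp only [smul_eq_mul]
    ring
  · rw [hJ]
    simp [lam, hew, hf]
  · intro h
    have : lam w = 1 := by simp [lam, hew, hf]
    rw [h] at this
    simp at this
  · intro u hu v
    have := LinearMap.congr_fun (e_mul ψ π hu) v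
    simp only [Module.End.mul_apply, LinearMap.smul_apply] at this
    simp only [lam, LinearMap.comp_apply]
    rw [← he] at this
    rw [this, map_smul, smul_eq_mul]

theorem bessel_properties
    (ψ : AddChar F ℂˣ) (hψ : ∃ a : F, ψ a ≠ 1)
    (n : ℕ)
    {V : Type*} [AddCommGroup V] [Module ℂ V] [FiniteDimensional ℂ V] [Nontrivial V]
    (π : Representation ℂ (GL (Fin n) F) V)
    (hπirr : IsIrreducible π)
    (hπgen : ∃ lam : V →ₗ[ℂ] ℂ, lam ≠ 0 ∧ IsWhittaker π (psiN ψ) lam) :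
    (∀ u₁ u₂ g : GL (Fin n) F,
        IsUnip F (u₁ : Matrix (Fin n) (Fin n) F) →
        IsUnip F (u₂ : Matrix (Fin n) (Fin n) F) →
        Bessel π (psiN ψ) (u₁ * g * u₂) = psiN ψ u₁ * psiN ψ u₂ * Bessel π (psiN ψ) g) ∧
    Bessel π (psiN ψ) 1 = 1 ∧
    (∃ lam : V →ₗ[ℂ] ℂ, lam ≠ 0 ∧ IsWhittaker π (psiN ψ) lam ∧
      ∃ v : V, ∀ g : GL (Fin n) F, Bessel π (psiN ψ) g = lam (π g v)) := by
  exact bessel_main ψ hψ n π hπirr hπgen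

end Stmt1
end
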